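/- Assume hypotheses (C1) and (H), and let u ∈ C²([a,b]) be a solution of the straight BVP; u is then strictly increasing with u' > 0 on [a,b], and its inverse x = u⁻¹ : [0,u_b] → [a,b] is continuously differentiable. Then there exist constants κ_S > 0, κ_I > 0 and h₀ > 0, depending only on N, a, b, c and u_b, such that for every straight mesh on [a,c] and inverse mesh on [0,u_b] whose maximal step size h satisfies h ≤ h₀, and for every scheme pair (ũ, x̃) additionally satisfying the inequalities 0 < ũ(x) < u_b, ũ'(x) > 0, ũ''(x) ≥ 0 on (a,c] and c < x̃(v), x̃'(v) > 0, x̃''(v) ≤ 0 on (ũ(c), u_b] (second derivatives taken on mesh subintervals), one has max_{x ∈ [a,c]} max(|u(x) − ũ(x)|, |u'(x) − ũ'(x)|) ≤ κ_S·h² and max_{v ∈ [ũ(c), u_b]} max(|x(v) − x̃(v)|, |x'(v) − x̃'(v)|) ≤ κ_I·h². -/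

import Mathlib

open Set Filter

noncomputable section

/-- Partial derivative of a two-argument function with respect to its first argument. -/
def pd1 (f : ℝ → ℝ → ℝ) (u x : ℝ) : ℝ := deriv (fun t => f t x) u

/-- Partial derivative of a two-argument function with respect to its second argument. -/
def pd2 (f : ℝ → ℝ → ℝ) (u x : ℝ) : ℝ := deriv (fun s => f u s) x

/-- The nonlinearity `𝒩(u,x) = N(u,x)·u`. -/
def Ncal (N : ℝ → ℝ → ℝ) (u x : ℝ) : ℝ := N u x * u

/-- `u` is twice continuously differentiable on `s`, with first derivative `u'`
and second derivative `u''` (derivatives within `s`). -/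
def IsC2On (u u' u'' : ℝ → ℝ) (s : Set ℝ) : Prop :=
  (∀ x ∈ s, HasDerivWithinAt u (u' x) s x) ∧
  (∀ x ∈ s, HasDerivWithinAt u' (u'' x) s x) ∧
  ContinuousOn u'' s

/-- The straight boundary value problem: `u ∈ C²([a,b])`, `u'' = 𝒩(u(x),x)` on `[a,b]`,
`u(a) = 0`, `u(b) = ub`. -/
def IsStraightBVP (N : ℝ → ℝ → ℝ) (a b ub : ℝ) (u u' u'' : ℝ → ℝ) : Prop :=
  IsC2On u u' u'' (Icc a b) ∧
  (∀ x ∈ Icc a b, u'' x = Ncal N (u x) x) ∧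
  u a = 0 ∧ u b = ub

/-- Hypothesis (H): `N`, `∂N/∂x`, `∂N/∂u`, `∂²N/∂x∂u`, `∂²N/∂u²` are all
nonnegative for `u ≥ 0` and `x ∈ [a,b]`. -/
def HypH (N : ℝ → ℝ → ℝ) (a b : ℝ) : Prop :=
  ∀ u : ℝ, 0 ≤ u → ∀ x ∈ Icc a b,
    0 ≤ N u x ∧ 0 ≤ pd2 N u x ∧ 0 ≤ pd1 N u x ∧
    0 ≤ pd2 (pd1 N) u x ∧ 0 ≤ pd1 (pd1 N) u x

/-- A mesh: finitely many strictly increasing points `pt 0 < pt 1 < ⋯ < pt n`. -/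
structure Mesh where
  n : ℕ
  pt : ℕ → ℝ
  npos : 0 < n
  mono : ∀ i < n, pt i < pt (i + 1)

/-- The coefficient `α_i(p,q,x)` of the straight discretized equation,
where `xi` is the mesh point `x_i`. -/
def alphaC (N : ℝ → ℝ → ℝ) (xi p q x : ℝ) : ℝ :=
  (pd1 N q xi * p + pd2 N q xi) * (x - xi) + N q xi

/-- The coefficient `β_i(p,q,v)` of the inverse discretized equation,
where `ui` is the (shifted) mesh point `ū_i`. -/
def betaC (N : ℝ → ℝ → ℝ) (ui p q v : ℝ) : ℝ :=
  -(pd1 (Ncal N) ui q + pd2 (Ncal N) ui q * p) * (v - ui) - Ncal N ui q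

/-- Shifted mesh knots `ū_i = max(u_i, s)`. -/
def ubar (m : Mesh) (s : ℝ) (i : ℕ) : ℝ := max (m.pt i) s

/-- A straight scheme solution on `[a,c]` with respect to the mesh `m`:
`ũ ∈ C¹([a,c])` and on each mesh subinterval `[x_i, x_{i+1}]` the second
derivative of `ũ` equals `α_i(ũ'(x_i), ũ(x_i), x)·ũ(x)`. -/
def IsStraightSol (N : ℝ → ℝ → ℝ) (a c : ℝ) (m : Mesh) (u u' : ℝ → ℝ) : Prop :=
  (∀ x ∈ Icc a c, HasDerivWithinAt u (u' x) (Icc a c) x) ∧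
  ContinuousOn u' (Icc a c) ∧
  ∀ i < m.n, ∀ x ∈ Icc (m.pt i) (m.pt (i + 1)),
    HasDerivWithinAt u'
      (alphaC N (m.pt i) (u' (m.pt i)) (u (m.pt i)) x * u x)
      (Icc (m.pt i) (m.pt (i + 1))) x

/-- An inverse scheme solution on `[s, ub]` with respect to the mesh `m` (shifted by `s`):
`x̃ ∈ C¹([s,ub])` and on each subinterval `[ū_i, ū_{i+1}]` the second derivative of `x̃`
equals `β_i(x̃'(ū_i), x̃(ū_i), v)·(x̃'(v))³`. -/
def IsInvSol (N : ℝ → ℝ → ℝ) (ub : ℝ) (m : Mesh) (s : ℝ) (X X' : ℝ → ℝ) : Prop :=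
  (∀ v ∈ Icc s ub, HasDerivWithinAt X (X' v) (Icc s ub) v) ∧
  ContinuousOn X' (Icc s ub) ∧
  ∀ i < m.n, ∀ v ∈ Icc (ubar m s i) (ubar m s (i + 1)),
    HasDerivWithinAt X'
      (betaC N (ubar m s i) (X' (ubar m s i)) (X (ubar m s i)) v * (X' v) ^ 3)
      (Icc (ubar m s i) (ubar m s (i + 1))) v

/-- A scheme pair `(ũ, x̃)`. -/
def IsSchemePair (N : ℝ → ℝ → ℝ) (a b c ub : ℝ) (ms mi : Mesh)
    (u u' X X' : ℝ → ℝ) : Prop :=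
  IsStraightSol N a c ms u u' ∧ u a = 0 ∧ 0 < u c ∧ u c < ub ∧ u' c ≠ 0 ∧
  IsInvSol N ub mi (u c) X X' ∧ X ub = b ∧ X (u c) = c ∧ X' (u c) = 1 / u' c

/-- A scheme pair additionally satisfying the sign inequalities
`0 < ũ < u_b`, `ũ' > 0`, `ũ'' ≥ 0` on `(a,c]`, and `c < x̃`, `x̃' > 0`, `x̃'' ≤ 0`
on `(ũ(c), u_b]` (second derivatives taken on the mesh subintervals). -/
def GoodPair (N : ℝ → ℝ → ℝ) (a b c ub : ℝ) (ms mi : Mesh)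
    (u u' X X' : ℝ → ℝ) : Prop :=
  IsSchemePair N a b c ub ms mi u u' X X' ∧
  (∀ x ∈ Ioc a c, 0 < u x ∧ u x < ub ∧ 0 < u' x) ∧
  (∀ i < ms.n, ∀ x ∈ Icc (ms.pt i) (ms.pt (i + 1)), x ∈ Ioc a c →
    0 ≤ alphaC N (ms.pt i) (u' (ms.pt i)) (u (ms.pt i)) x * u x) ∧
  (∀ v ∈ Ioc (u c) ub, c < X v ∧ 0 < X' v) ∧
  (∀ i < mi.n, ∀ v ∈ Icc (ubar mi (u c) i) (ubar mi (u c) (i + 1)), v ∈ Ioc (u c) ub →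
    betaC N (ubar mi (u c) i) (X' (ubar mi (u c) i)) (X (ubar mi (u c) i)) v * (X' v) ^ 3 ≤ 0)

/-- All steps of the straight mesh `ms` and of the (shifted) inverse mesh `mi`
are of size at most `h`. -/
def StepLe (ms mi : Mesh) (s h : ℝ) : Prop :=
  (∀ i < ms.n, ms.pt (i + 1) - ms.pt i ≤ h) ∧
  (∀ i < mi.n, ubar mi s (i + 1) - ubar mi s i ≤ h)

open scoped Topology

/-! ### Calculus with right derivatives -/

lemma HasDerivWithinAt.Icc_to_Ici {f : ℝ → ℝ} {d l r x : ℝ}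
    (h : HasDerivWithinAt f d (Icc l r) x) (hx : x ∈ Ico l r) :
    HasDerivWithinAt f d (Ici x) x :=
  h.mono_of_mem_nhdsWithin (Icc_mem_nhdsGE_of_mem hx)

lemma sub_le_of_right_deriv_le {f f' : ℝ → ℝ} {l r C : ℝ} (hf : ContinuousOn f (Icc l r))
    (hf' : ∀ x ∈ Ico l r, HasDerivWithinAt f (f' x) (Ici x) x)
    (hC : ∀ x ∈ Ico l r, f' x ≤ C) {x y : ℝ} (hx : l ≤ x) (hxy : x ≤ y) (hy : y ≤ r) :
    f y - f x ≤ C * (y - x) := by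
  have hsub : Icc x y ⊆ Icc l r := Icc_subset_Icc hx hy
  have hsub' : Ico x y ⊆ Ico l r := Ico_subset_Ico hx hy
  have := image_le_of_deriv_right_le_deriv_boundary (f := f) (f' := f')
    (B := fun t => f x + C * (t - x)) (B' := fun _ => C) (hf.mono hsub)
    (fun t ht => hf' t (hsub' ht)) (by simp) (by fun_prop)
    (fun t _ => by
      simpa using ((((hasDerivAt_id t).sub_const x).const_mul C).const_add (f x)).hasDerivWithinAt)
    (fun t ht => hC t (hsub' ht)) (right_mem_Icc.2 hxy)
  linarith

lemma le_sub_of_le_right_deriv {f f' : ℝ → ℝ} {l r C : ℝ} (hf : ContinuousOn f (Icc l r))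
    (hf' : ∀ x ∈ Ico l r, HasDerivWithinAt f (f' x) (Ici x) x)
    (hC : ∀ x ∈ Ico l r, C ≤ f' x) {x y : ℝ} (hx : l ≤ x) (hxy : x ≤ y) (hy : y ≤ r) :
    C * (y - x) ≤ f y - f x := by
  have := sub_le_of_right_deriv_le (C := -C) hf.neg (fun t ht => (hf' t ht).neg)
    (fun t ht => neg_le_neg (hC t ht)) hx hxy hy
  simp only [Pi.neg_apply] at this
  linarith

lemma abs_sub_le_of_abs_right_deriv_le {f f' : ℝ → ℝ} {l r C : ℝ}
    (hf : ContinuousOn f (Icc l r))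
    (hf' : ∀ x ∈ Ico l r, HasDerivWithinAt f (f' x) (Ici x) x)
    (hC : ∀ x ∈ Ico l r, |f' x| ≤ C) {x y : ℝ} (hx : l ≤ x) (hxy : x ≤ y) (hy : y ≤ r) :
    |f y - f x| ≤ C * (y - x) := by
  have h₁ := sub_le_of_right_deriv_le hf hf' (fun t ht => (abs_le.1 (hC t ht)).2) hx hxy hy
  have h₂ := le_sub_of_le_right_deriv hf hf' (fun t ht => (abs_le.1 (hC t ht)).1) hx hxy hy
  exact abs_le.2 ⟨by linarith, h₁⟩

lemma monotoneOn_of_right_deriv_nonneg {f f' : ℝ → ℝ} {l r : ℝ} (hf : ContinuousOn f (Icc l r))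
    (hf' : ∀ x ∈ Ico l r, HasDerivWithinAt f (f' x) (Ici x) x)
    (h0 : ∀ x ∈ Ico l r, 0 ≤ f' x) : MonotoneOn f (Icc l r) := by
  intro x hx y hy hxy
  have := le_sub_of_le_right_deriv hf hf' h0 hx.1 hxy hy.2
  linarith

/-- First-order Taylor estimate for a `C¹` function whose derivative has a bounded right
derivative. -/
lemma abs_taylor_le_of_right_deriv {f f' f'' : ℝ → ℝ} {l r D : ℝ}
    (hf : ∀ x ∈ Icc l r, HasDerivWithinAt f (f' x) (Icc l r) x)
    (hf'c : ContinuousOn f' (Icc l r))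
    (hf'' : ∀ x ∈ Ico l r, HasDerivWithinAt f' (f'' x) (Ici x) x)
    (hD : ∀ x ∈ Ico l r, |f'' x| ≤ D) {x y : ℝ} (hx : l ≤ x) (hxy : x ≤ y) (hy : y ≤ r) :
    |f y - f x - f' x * (y - x)| ≤ D * (y - x) ^ 2 := by
  rcases hxy.eq_or_lt with rfl | hlt
  · simp
  have hD0 : 0 ≤ D := (abs_nonneg _).trans (hD x ⟨hx, hlt.trans_le hy⟩)
  have hfc : ContinuousOn f (Icc l r) := fun t ht => (hf t ht).continuousWithinAt
  have := abs_sub_le_of_abs_right_deriv_le (f := fun t => f t - f' x * t)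
    (f' := fun t => f' t - f' x) (l := x) (r := y) (C := D * (y - x))
    ((hfc.mono (Icc_subset_Icc hx hy)).sub (by fun_prop))
    (fun t ht => by
      have h1 := (hf t ⟨hx.trans ht.1, ht.2.le.trans hy⟩).Icc_to_Ici
        ⟨hx.trans ht.1, ht.2.trans_le hy⟩
      have h2 := ((hasDerivAt_id' t).const_mul (f' x)).hasDerivWithinAt (s := Ici t)
      rw [mul_one] at h2
      exact h1.sub h2)
    (fun t ht => by
      refine (abs_sub_le_of_abs_right_deriv_le hf'c hf'' hD hx ht.1 (ht.2.le.trans hy)).trans ?_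
      exact mul_le_mul_of_nonneg_left (by linarith [ht.2]) hD0) le_rfl hxy le_rfl
  calc _ = |f y - f' x * y - (f x - f' x * x)| := by congr 1; ring
    _ ≤ _ := this
    _ = _ := by ring

lemma right_deriv_gronwall {f f' : ℝ → ℝ} {l r K : ℝ} (hlr : l ≤ r)
    (hf : ContinuousOn f (Icc l r))
    (hf' : ∀ x ∈ Ico l r, HasDerivWithinAt f (f' x) (Ici x) x)
    (hf0 : ∀ x ∈ Icc l r, 0 ≤ f x) (hf'0 : ∀ x ∈ Ico l r, 0 ≤ f' x)
    (hK : ∀ x ∈ Ico l r, f' x ≤ K * f x) : f r ≤ f l * Real.exp (K * (r - l)) := by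
  have := norm_le_gronwallBound_of_norm_deriv_right_le (δ := f l) (K := K) (ε := 0) hf hf'
    (by rw [Real.norm_of_nonneg (hf0 l (left_mem_Icc.2 hlr))])
    (fun x hx => by
      rw [Real.norm_of_nonneg (hf0 x ⟨hx.1, hx.2.le⟩), Real.norm_of_nonneg (hf'0 x hx), add_zero]
      exact hK x hx) r (right_mem_Icc.2 hlr)
  rwa [gronwallBound_ε0, Real.norm_of_nonneg (hf0 r (right_mem_Icc.2 hlr))] at this

/-! ### A maximum principle -/

lemma nonpos_of_right_second_deriv_pos {z z' : ℝ → ℝ} {l r : ℝ}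
    (hz : ∀ x ∈ Icc l r, HasDerivWithinAt z (z' x) (Icc l r) x)
    (hz' : ∀ x ∈ Ioo l r, 0 < z x → ∃ d, 0 < d ∧ HasDerivWithinAt z' d (Ici x) x)
    (hl : z l ≤ 0) (hr : z r ≤ 0) {x : ℝ} (hx : x ∈ Icc l r) : z x ≤ 0 := by
  have hzc : ContinuousOn z (Icc l r) := fun t ht => (hz t ht).continuousWithinAt
  obtain ⟨t, ht, hmax⟩ := isCompact_Icc.exists_isMaxOn ⟨x, hx⟩ hzc
  refine (hmax hx).trans ?_
  by_contra! hpos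
  have ht' : t ∈ Ioo l r := by
    refine ⟨lt_of_le_of_ne ht.1 ?_, lt_of_le_of_ne ht.2 ?_⟩
    · rintro rfl; exact absurd hl (not_le.2 hpos)
    · rintro rfl; exact absurd hr (not_le.2 hpos)
  have hnhds := Icc_mem_nhds ht'.1 ht'.2
  have hcrit : z' t = 0 := (hmax.isLocalMax hnhds).hasDerivAt_eq_zero ((hz t ht).hasDerivAt hnhds)
  obtain ⟨d, hd, hder⟩ := hz' t ht' hpos
  have hev : ∀ᶠ y in 𝓝[>] t, 0 < z' y := by
    have hsl := (hasDerivWithinAt_iff_tendsto_slope.1 hder).eventually (lt_mem_nhds hd)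
    rw [Ici_sdiff_left] at hsl
    filter_upwards [hsl, self_mem_nhdsWithin] with y hy hty
    rw [slope_def_field, hcrit, sub_zero] at hy
    exact (div_pos_iff_of_pos_right (sub_pos.2 hty)).1 hy
  obtain ⟨w, hw, hwpos⟩ := (mem_nhdsGT_iff_exists_Ioo_subset' ht'.2).1 hev
  set y := min w r with hydef
  have hty : t < y := lt_min hw ht'.2
  have hsub : Icc t y ⊆ Icc l r := Icc_subset_Icc ht.1 (min_le_right _ _)
  have hmono : StrictMonoOn z (Icc t y) := by
    refine strictMonoOn_of_hasDerivWithinAt_pos (f' := z') (convex_Icc t y) (hzc.mono hsub) ?_ ?_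
    · intro s hs
      exact (hz s (hsub (interior_subset hs))).mono (interior_subset.trans hsub)
    · intro s hs
      rw [interior_Icc] at hs
      exact hwpos ⟨hs.1, hs.2.trans_le (min_le_left _ _)⟩
  have := hmono (left_mem_Icc.2 hty.le) (right_mem_Icc.2 hty.le) hty
  exact absurd (hmax (hsub (right_mem_Icc.2 hty.le))) (not_le.2 this)

lemma nonpos_of_right_second_deriv_nonneg {z z' : ℝ → ℝ} {l r : ℝ}
    (hz : ∀ x ∈ Icc l r, HasDerivWithinAt z (z' x) (Icc l r) x)
    (hz' : ∀ x ∈ Ioo l r, 0 < z x → ∃ d, 0 ≤ d ∧ HasDerivWithinAt z' d (Ici x) x)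
    (hl : z l ≤ 0) (hr : z r ≤ 0) {x : ℝ} (hx : x ∈ Icc l r) : z x ≤ 0 := by
  have hψ : ∀ t ∈ Icc l r, 0 ≤ (t - l) * (r - t) := fun t ht =>
    mul_nonneg (sub_nonneg.2 ht.1) (sub_nonneg.2 ht.2)
  have key : ∀ ε > 0, z x ≤ ε * ((x - l) * (r - x)) := by
    intro ε hε
    have := nonpos_of_right_second_deriv_pos (z := fun t => z t - ε * ((t - l) * (r - t)))
      (z' := fun t => z' t - ε * (l + r - 2 * t)) (l := l) (r := r) ?_ ?_ (by simpa) (by simpa) hx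
    · linarith
    · intro t ht
      refine (hz t ht).sub (HasDerivAt.hasDerivWithinAt ?_)
      refine HasDerivAt.congr_deriv ((((hasDerivAt_id' t).sub_const l).mul
        ((hasDerivAt_id' t).const_sub r)).const_mul ε) ?_
      ring
    · intro t ht htz
      obtain ⟨d, hd, hder⟩ := hz' t ht (by
        have := mul_nonneg hε.le (hψ t ⟨ht.1.le, ht.2.le⟩); linarith)
      refine ⟨d + 2 * ε, by linarith, ?_⟩
      refine (hder.sub (HasDerivAt.hasDerivWithinAt
        (((hasDerivAt_id' t).const_mul 2).const_sub (l + r) |>.const_mul ε))).congr_deriv ?_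
      ring
  have hlim : Tendsto (fun ε : ℝ => ε * ((x - l) * (r - x))) (𝓝[>] 0) (𝓝 0) := by
    have : Tendsto (fun ε : ℝ => ε * ((x - l) * (r - x))) (𝓝 0) (𝓝 (0 * ((x - l) * (r - x)))) :=
      Continuous.tendsto (by fun_prop) 0
    rw [zero_mul] at this
    exact this.mono_left nhdsWithin_le_nhds
  exact ge_of_tendsto hlim (eventually_nhdsWithin_of_forall fun ε hε => key ε hε)

/-! ### Inverse functions on an interval -/

lemma exists_inverse_of_deriv_pos {f f' : ℝ → ℝ} {l r : ℝ} (hlr : l ≤ r)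
    (hf : ∀ x ∈ Icc l r, HasDerivWithinAt f (f' x) (Icc l r) x)
    (hf'c : ContinuousOn f' (Icc l r)) (hpos : ∀ x ∈ Icc l r, 0 < f' x) :
    ∃ g : ℝ → ℝ, (∀ x ∈ Icc l r, f x ∈ Icc (f l) (f r) ∧ g (f x) = x) ∧
      (∀ v ∈ Icc (f l) (f r), g v ∈ Icc l r ∧ f (g v) = v) ∧
      (∀ v ∈ Icc (f l) (f r), HasDerivWithinAt g (1 / f' (g v)) (Icc (f l) (f r)) v) ∧
      MonotoneOn g (Icc (f l) (f r)) := by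
  have hfc : ContinuousOn f (Icc l r) := fun t ht => (hf t ht).continuousWithinAt
  have hmono : StrictMonoOn f (Icc l r) :=
    strictMonoOn_of_hasDerivWithinAt_pos (f' := f') (convex_Icc l r) hfc
      (fun s hs => (hf s (interior_subset hs)).mono interior_subset)
      (fun s hs => hpos s (interior_subset hs))
  have hl := left_mem_Icc.2 hlr
  have hr := right_mem_Icc.2 hlr
  have hmaps : ∀ x ∈ Icc l r, f x ∈ Icc (f l) (f r) := fun x hx =>
    ⟨hmono.monotoneOn hl hx hx.1, hmono.monotoneOn hx hr hx.2⟩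
  have hsurj : Icc (f l) (f r) ⊆ f '' Icc l r := intermediate_value_Icc hlr hfc
  set g := Function.invFunOn f (Icc l r) with hg
  have hgr : ∀ v ∈ Icc (f l) (f r), g v ∈ Icc l r ∧ f (g v) = v := fun v hv =>
    ⟨Function.invFunOn_mem (hsurj hv), Function.invFunOn_eq (hsurj hv)⟩
  have hgmono : MonotoneOn g (Icc (f l) (f r)) := by
    intro v hv w hw hvw
    rw [← hmono.le_iff_le (hgr v hv).1 (hgr w hw).1, (hgr v hv).2, (hgr w hw).2]
    exact hvw
  have hgl : ∀ x ∈ Icc l r, g (f x) = x := fun x hx =>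
    hmono.injOn (hgr _ (hmaps x hx)).1 hx (hgr _ (hmaps x hx)).2
  refine ⟨g, fun x hx => ⟨hmaps x hx, hgl x hx⟩, hgr, fun v hv => ?_, hgmono⟩
  obtain ⟨t, ht, hmin⟩ := isCompact_Icc.exists_isMinOn ⟨l, hl⟩ hf'c
  have hm := hpos t ht
  have hexp : ∀ x ∈ Icc l r, ∀ y ∈ Icc l r, x ≤ y → f' t * (y - x) ≤ f y - f x :=
    fun x hx y hy hxy => le_sub_of_le_right_deriv hfc
      (fun s hs => (hf s ⟨hs.1, hs.2.le⟩).Icc_to_Ici hs)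
      (fun s hs => hmin ⟨hs.1, hs.2.le⟩) hx.1 hxy hy.2
  have hlip : LipschitzOnWith (Real.toNNReal (f' t)⁻¹) g (Icc (f l) (f r)) := by
    refine LipschitzOnWith.of_dist_le_mul fun v hv w hw => ?_
    rw [Real.coe_toNNReal _ (inv_nonneg.2 hm.le), Real.dist_eq, Real.dist_eq]
    obtain ⟨hgv, hfv⟩ := hgr v hv
    obtain ⟨hgw, hfw⟩ := hgr w hw
    rw [inv_mul_eq_div, le_div_iff₀ hm]
    rcases le_total (g v) (g w) with h | h
    · have := hexp _ hgv _ hgw h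
      rw [hfv, hfw] at this
      rw [abs_sub_comm, abs_of_nonneg (sub_nonneg.2 h), abs_sub_comm]
      linarith [le_abs_self (w - v)]
    · have := hexp _ hgw _ hgv h
      rw [hfv, hfw] at this
      rw [abs_of_nonneg (sub_nonneg.2 h)]
      linarith [le_abs_self (v - w)]
  have htend : Tendsto g (𝓝[Icc (f l) (f r)] v) (𝓝[Icc l r] (g v)) :=
    tendsto_nhdsWithin_iff.2 ⟨hlip.continuousOn v hv,
      eventually_nhdsWithin_of_forall fun w hw => (hgr w hw).1⟩
  have hne := (hpos _ (hgr v hv).1).ne'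
  have hF : HasFDerivWithinAt f
      (ContinuousLinearEquiv.unitsEquivAut ℝ (Units.mk0 (f' (g v)) hne) : ℝ →L[ℝ] ℝ)
      (Icc l r) (g v) := (hf _ (hgr v hv).1).hasFDerivWithinAt
  have := hF.of_local_left_inverse htend hv
    (eventually_nhdsWithin_of_forall fun w hw => (hgr w hw).2)
  refine this.hasDerivWithinAt.congr_deriv ?_
  simp [ContinuousLinearEquiv.unitsEquivAut]

/-- The inverse of an increasing `C¹` function inherits right second derivatives. -/
lemma exists_inverse_with_right_second_deriv {f f' f'' : ℝ → ℝ} {l r : ℝ} (hlr : l ≤ r)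
    (hf : ∀ x ∈ Icc l r, HasDerivWithinAt f (f' x) (Icc l r) x)
    (hf'c : ContinuousOn f' (Icc l r)) (hpos : ∀ x ∈ Icc l r, 0 < f' x)
    (hf'' : ∀ x ∈ Ico l r, HasDerivWithinAt f' (f'' x) (Ici x) x) :
    ∃ g : ℝ → ℝ, (∀ x ∈ Icc l r, f x ∈ Icc (f l) (f r) ∧ g (f x) = x) ∧
      (∀ v ∈ Icc (f l) (f r), g v ∈ Icc l r ∧ f (g v) = v) ∧
      (∀ v ∈ Icc (f l) (f r), HasDerivWithinAt g (1 / f' (g v)) (Icc (f l) (f r)) v) ∧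
      ContinuousOn (fun v => 1 / f' (g v)) (Icc (f l) (f r)) ∧
      (∀ v ∈ Ico (f l) (f r), g v ∈ Ico l r ∧
        HasDerivWithinAt (fun v => 1 / f' (g v)) (-f'' (g v) / f' (g v) ^ 3) (Ici v) v) := by
  obtain ⟨g, hgl, hgr, hgd, hgm⟩ := exists_inverse_of_deriv_pos hlr hf hf'c hpos
  have hgc : ContinuousOn g (Icc (f l) (f r)) := fun v hv => (hgd v hv).continuousWithinAt
  refine ⟨g, hgl, hgr, hgd, ?_, fun v hv => ?_⟩
  · exact continuousOn_const.div (hf'c.comp hgc fun v hv => (hgr v hv).1)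
      fun v hv => (hpos _ (hgr v hv).1).ne'
  · have hv' : v ∈ Icc (f l) (f r) := ⟨hv.1, hv.2.le⟩
    have hgv : g v ∈ Ico l r := by
      refine ⟨(hgr v hv').1.1, lt_of_le_of_ne (hgr v hv').1.2 fun h => ?_⟩
      have := (hgr v hv').2
      rw [h] at this
      exact hv.2.ne' this
    refine ⟨hgv, ?_⟩
    have hcomp : HasDerivWithinAt (f' ∘ g) (f'' (g v) * (1 / f' (g v))) (Icc v (f r)) v :=
      (hf'' _ hgv).comp v ((hgd v hv').mono (Icc_subset_Icc_left hv.1))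
        fun w hw => hgm hv' ⟨hv.1.trans hw.1, hw.2⟩ hw.1
    have hne : f' (g v) ≠ 0 := (hpos _ (hgr v hv').1).ne'
    have hinv := (hcomp.inv hne).Icc_to_Ici ⟨le_rfl, hv.2⟩
    simp only [one_div]
    refine hinv.congr_deriv ?_
    simp only [Function.comp_apply]
    field_simp

/-! ### Bounds for twice continuously differentiable functions on a box -/

/-- `M` bounds `F`, its first partial derivatives, its first-order Taylor remainders and its
Lipschitz constant in the first variable on the box `[l₁, r₁] × [l₂, r₂]`. -/
structure IsTaylorBound (F : ℝ → ℝ → ℝ) (l₁ r₁ l₂ r₂ M : ℝ) : Prop where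
  pos : 0 < M
  abs_apply_le : ∀ q ∈ Icc l₁ r₁, ∀ y ∈ Icc l₂ r₂, |F q y| ≤ M
  abs_pd1_le : ∀ q ∈ Icc l₁ r₁, ∀ y ∈ Icc l₂ r₂, |pd1 F q y| ≤ M
  abs_pd2_le : ∀ q ∈ Icc l₁ r₁, ∀ y ∈ Icc l₂ r₂, |pd2 F q y| ≤ M
  lip : ∀ q ∈ Icc l₁ r₁, ∀ q' ∈ Icc l₁ r₁, ∀ y ∈ Icc l₂ r₂, |F q' y - F q y| ≤ M * |q' - q|
  taylor : ∀ q ∈ Icc l₁ r₁, ∀ y ∈ Icc l₂ r₂, ∀ q' ∈ Icc l₁ r₁, ∀ y' ∈ Icc l₂ r₂,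
    |F q' y' - F q y - (pd1 F q y * (q' - q) + pd2 F q y * (y' - y))| ≤
      M * ((q' - q) ^ 2 + (y' - y) ^ 2)

lemma hasDerivAt_pd1 {F : ℝ → ℝ → ℝ} (hF : Differentiable ℝ (Function.uncurry F)) (q y : ℝ) :
    HasDerivAt (fun t => F t y) (fderiv ℝ (Function.uncurry F) (q, y) (1, 0)) q :=
  (hF (q, y)).hasFDerivAt.comp_hasDerivAt (f := fun t => (t, y)) q
    ((hasDerivAt_id' q).prodMk (hasDerivAt_const q y))

lemma hasDerivAt_pd2 {F : ℝ → ℝ → ℝ} (hF : Differentiable ℝ (Function.uncurry F)) (q y : ℝ) :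
    HasDerivAt (fun t => F q t) (fderiv ℝ (Function.uncurry F) (q, y) (0, 1)) y :=
  (hF (q, y)).hasFDerivAt.comp_hasDerivAt (f := fun t => (q, t)) y
    ((hasDerivAt_const y q).prodMk (hasDerivAt_id' y))

lemma exists_isTaylorBound {F : ℝ → ℝ → ℝ} (hF : ContDiff ℝ 2 (Function.uncurry F))
    (l₁ r₁ l₂ r₂ : ℝ) : ∃ M, IsTaylorBound F l₁ r₁ l₂ r₂ M := by
  set G := Function.uncurry F with hG
  set S : Set (ℝ × ℝ) := Icc l₁ r₁ ×ˢ Icc l₂ r₂ with hS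
  have hSc : IsCompact S := isCompact_Icc.prod isCompact_Icc
  have hSconv : Convex ℝ S := (convex_Icc _ _).prod (convex_Icc _ _)
  have hd : Differentiable ℝ G := hF.differentiable (by norm_num)
  have hfd : ContDiff ℝ 1 (fderiv ℝ G) := hF.fderiv_right (by norm_num)
  obtain ⟨A, hA⟩ := hSc.exists_bound_of_continuousOn hF.continuous.continuousOn
  obtain ⟨B, hB⟩ := hSc.exists_bound_of_continuousOn hfd.continuous.continuousOn
  obtain ⟨K, hK⟩ := hfd.contDiffOn.exists_lipschitzOnWith one_ne_zero hSconv hSc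
  obtain ⟨L, hL⟩ := hF.contDiffOn.exists_lipschitzOnWith two_ne_zero hSconv hSc
  have hp1 : ∀ q y, pd1 F q y = fderiv ℝ G (q, y) (1, 0) := fun q y =>
    (hasDerivAt_pd1 hd q y).deriv
  have hp2 : ∀ q y, pd2 F q y = fderiv ℝ G (q, y) (0, 1) := fun q y =>
    (hasDerivAt_pd2 hd q y).deriv
  have hdir : ∀ p ∈ S, ∀ w : ℝ × ℝ, ‖w‖ ≤ 1 → |fderiv ℝ G p w| ≤ |B| := fun p hp w hw => by
    have h1 := (fderiv ℝ G p).le_opNorm w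
    have h2 := (hB p hp).trans (le_abs_self B)
    rw [Real.norm_eq_abs] at h1
    nlinarith [norm_nonneg (fderiv ℝ G p), norm_nonneg w]
  have hK0 : (0 : ℝ) ≤ K := K.2
  have hL0 : (0 : ℝ) ≤ L := L.2
  have hA0 := abs_nonneg A
  have hB0 := abs_nonneg B
  refine ⟨|A| + |B| + K + L + 1, by positivity, ?_, ?_, ?_, ?_, ?_⟩
  · intro q hq y hy
    have h1 : |F q y| ≤ A := hA (q, y) ⟨hq, hy⟩
    linarith [le_abs_self A]
  · intro q hq y hy
    rw [hp1]
    have h1 := hdir (q, y) ⟨hq, hy⟩ (1, 0) (by simp [Prod.norm_def])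
    linarith
  · intro q hq y hy
    rw [hp2]
    have h1 := hdir (q, y) ⟨hq, hy⟩ (0, 1) (by simp [Prod.norm_def])
    linarith
  · intro q hq q' hq' y hy
    have h1 := hL.dist_le_mul (q', y) ⟨hq', hy⟩ (q, y) ⟨hq, hy⟩
    rw [Real.dist_eq, Prod.dist_eq, dist_self, max_eq_left dist_nonneg, Real.dist_eq] at h1
    refine le_trans h1 (mul_le_mul_of_nonneg_right ?_ (abs_nonneg _))
    linarith
  · intro q hq y hy q' hq' y' hy'
    have hseg : segment ℝ (q, y) (q', y') ⊆ S := hSconv.segment_subset ⟨hq, hy⟩ ⟨hq', hy'⟩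
    have h1 :=
      (convex_segment (𝕜 := ℝ) (q, y) (q', y')).norm_image_sub_le_of_norm_hasFDerivWithin_le'
      (f := G) (f' := fderiv ℝ G) (φ := fderiv ℝ G (q, y)) (C := K * ‖(q', y') - (q, y)‖)
      (fun p _ => (hd p).hasFDerivAt.hasFDerivWithinAt)
      (fun p hp => by
        have h2 := hK.dist_le_mul p (hseg hp) (q, y) ⟨hq, hy⟩
        rw [dist_eq_norm, dist_eq_norm] at h2
        refine h2.trans (mul_le_mul_of_nonneg_left ?_ hK0)
        exact norm_sub_le_of_mem_segment hp)
      (left_mem_segment ℝ _ _) (right_mem_segment ℝ _ _)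
    have hlin : fderiv ℝ G (q, y) ((q', y') - (q, y)) =
        pd1 F q y * (q' - q) + pd2 F q y * (y' - y) := by
      have : ((q', y') - (q, y) : ℝ × ℝ) =
          (q' - q) • ((1, 0) : ℝ × ℝ) + (y' - y) • ((0, 1) : ℝ × ℝ) := by
        simp
      rw [this, map_add, map_smul, map_smul, hp1, hp2, smul_eq_mul, smul_eq_mul]
      ring
    rw [hlin] at h1
    have hnorm : ‖((q', y') - (q, y) : ℝ × ℝ)‖ ^ 2 ≤ (q' - q) ^ 2 + (y' - y) ^ 2 := by
      rw [Prod.mk_sub_mk, Prod.norm_mk, Real.norm_eq_abs, Real.norm_eq_abs]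
      rcases max_choice |q' - q| |y' - y| with h | h <;> rw [h, sq_abs] <;>
        nlinarith [sq_nonneg (q' - q), sq_nonneg (y' - y)]
    calc _ ≤ K * ‖((q', y') - (q, y) : ℝ × ℝ)‖ * ‖((q', y') - (q, y) : ℝ × ℝ)‖ := h1
      _ = K * ‖((q', y') - (q, y) : ℝ × ℝ)‖ ^ 2 := by ring
      _ ≤ K * ((q' - q) ^ 2 + (y' - y) ^ 2) := mul_le_mul_of_nonneg_left hnorm hK0
      _ ≤ _ := mul_le_mul_of_nonneg_right (by linarith) (by positivity)

lemma contDiff_uncurry_Ncal {N : ℝ → ℝ → ℝ} (hN : ContDiff ℝ 2 (Function.uncurry N)) :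
    ContDiff ℝ 2 (Function.uncurry (Ncal N)) :=
  hN.mul contDiff_fst

lemma pd2_Ncal (N : ℝ → ℝ → ℝ) (u x : ℝ) : pd2 (Ncal N) u x = pd2 N u x * u := by
  simp only [pd2, Ncal]
  exact deriv_mul_const_field u

lemma Ncal_monotone {N : ℝ → ℝ → ℝ} (hN : ContDiff ℝ 2 (Function.uncurry N)) {x : ℝ}
    (h : ∀ t, 0 ≤ pd1 (Ncal N) t x) : Monotone fun t => Ncal N t x :=
  monotone_of_deriv_nonneg
    (fun t => (hasDerivAt_pd1 ((contDiff_uncurry_Ncal hN).differentiable (by norm_num))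
      t x).differentiableAt) h

/-- First-order Taylor expansion of `F` along a curve whose increments over a step of length `k`
are `p₁ k` and `p₂ k` up to second order. -/
lemma IsTaylorBound.along_curve {F : ℝ → ℝ → ℝ} {l₁ r₁ l₂ r₂ M : ℝ}
    (hM : IsTaylorBound F l₁ r₁ l₂ r₂ M) {q y q' y' p₁ p₂ k P D : ℝ}
    (hq : q ∈ Icc l₁ r₁) (hy : y ∈ Icc l₂ r₂) (hq' : q' ∈ Icc l₁ r₁) (hy' : y' ∈ Icc l₂ r₂)
    (hPq : |q' - q| ≤ P * k) (hPy : |y' - y| ≤ P * k)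
    (hDq : |q' - q - p₁ * k| ≤ D * k ^ 2) (hDy : |y' - y - p₂ * k| ≤ D * k ^ 2) :
    |(pd1 F q y * p₁ + pd2 F q y * p₂) * k + F q y - F q' y'| ≤
      (2 * M * P ^ 2 + 2 * M * D) * k ^ 2 := by
  have hT := hM.taylor q hq y hy q' hq' y' hy'
  have hq2 : (q' - q) ^ 2 ≤ (P * k) ^ 2 :=
    sq_le_sq' (by linarith [(abs_le.1 hPq).1]) (abs_le.1 hPq).2
  have hy2 : (y' - y) ^ 2 ≤ (P * k) ^ 2 :=
    sq_le_sq' (by linarith [(abs_le.1 hPy).1]) (abs_le.1 hPy).2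
  have h1 : |pd1 F q y * (q' - q - p₁ * k)| ≤ M * (D * k ^ 2) := by
    rw [abs_mul]
    exact mul_le_mul (hM.abs_pd1_le q hq y hy) hDq (abs_nonneg _) hM.pos.le
  have h2 : |pd2 F q y * (y' - y - p₂ * k)| ≤ M * (D * k ^ 2) := by
    rw [abs_mul]
    exact mul_le_mul (hM.abs_pd2_le q hq y hy) hDy (abs_nonneg _) hM.pos.le
  have h3 : M * ((q' - q) ^ 2 + (y' - y) ^ 2) ≤ M * (2 * (P * k) ^ 2) :=
    mul_le_mul_of_nonneg_left (by linarith) hM.pos.le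
  rw [abs_le] at hT h1 h2 ⊢
  constructor <;> nlinarith

/-! ### The exact solution -/

lemma IsStraightBVP.nonneg {N : ℝ → ℝ → ℝ} {a b ub : ℝ} {u u' u'' : ℝ → ℝ}
    (hub : 0 < ub) (hN : ContDiff ℝ 2 (Function.uncurry N))
    (hC1 : ∀ t : ℝ, ∀ x ∈ Icc a b, 0 ≤ pd1 (Ncal N) t x)
    (hu : IsStraightBVP N a b ub u u' u'') : ∀ x ∈ Icc a b, 0 ≤ u x := by
  obtain ⟨⟨hd, hd', -⟩, heq, hua, hubv⟩ := hu
  intro x hx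
  have := nonpos_of_right_second_deriv_nonneg (z := fun t => -u t) (z' := fun t => -u' t)
    (fun t ht => (hd t ht).neg) (fun t ht hpos => ?_) (by simp [hua]) (by simp [hubv, hub.le]) hx
  · linarith
  · have ht' : t ∈ Icc a b := ⟨ht.1.le, ht.2.le⟩
    refine ⟨-u'' t, ?_, ((hd' t ht').Icc_to_Ici ⟨ht.1.le, ht.2⟩).neg⟩
    have hm := Ncal_monotone hN (fun s => hC1 s t ht') (show u t ≤ 0 by linarith)
    rw [heq t ht']
    simp only [Ncal, mul_zero] at hm ⊢
    linarith

lemma IsStraightBVP.monotoneOn_deriv {N : ℝ → ℝ → ℝ} {a b ub : ℝ} {u u' u'' : ℝ → ℝ}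
    (hH : HypH N a b) (hnn : ∀ x ∈ Icc a b, 0 ≤ u x)
    (hu : IsStraightBVP N a b ub u u' u'') : MonotoneOn u' (Icc a b) := by
  obtain ⟨⟨-, hd', -⟩, heq, -, -⟩ := hu
  refine monotoneOn_of_right_deriv_nonneg (f' := u'') (fun t ht => (hd' t ht).continuousWithinAt)
    (fun t ht => (hd' t ⟨ht.1, ht.2.le⟩).Icc_to_Ici ht) fun t ht => ?_
  have ht' : t ∈ Icc a b := ⟨ht.1, ht.2.le⟩
  rw [heq t ht']
  exact mul_nonneg (hH _ (hnn t ht') t ht').1 (hnn t ht')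

lemma IsStraightBVP.deriv_pos {N : ℝ → ℝ → ℝ} {a b ub : ℝ} {u u' u'' : ℝ → ℝ}
    (hab : a < b) (hub : 0 < ub) (hN : ContDiff ℝ 2 (Function.uncurry N))
    (hC1 : ∀ t : ℝ, ∀ x ∈ Icc a b, 0 ≤ pd1 (Ncal N) t x) (hH : HypH N a b)
    (hu : IsStraightBVP N a b ub u u' u'') : ∀ x ∈ Icc a b, 0 < u' x := by
  have hnn := hu.nonneg hub hN hC1
  have hmono := hu.monotoneOn_deriv hH hnn
  obtain ⟨⟨hd, hd', hc''⟩, heq, hua, hubv⟩ := hu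
  have hal : a ∈ Icc a b := left_mem_Icc.2 hab.le
  have hbr : b ∈ Icc a b := right_mem_Icc.2 hab.le
  have hc : ContinuousOn u (Icc a b) := fun t ht => (hd t ht).continuousWithinAt
  have hc' : ContinuousOn u' (Icc a b) := fun t ht => (hd' t ht).continuousWithinAt
  have hR : ∀ t ∈ Ico a b, HasDerivWithinAt u (u' t) (Ici t) t := fun t ht =>
    (hd t ⟨ht.1, ht.2.le⟩).Icc_to_Ici ht
  have hR' : ∀ t ∈ Ico a b, HasDerivWithinAt u' (u'' t) (Ici t) t := fun t ht =>
    (hd' t ⟨ht.1, ht.2.le⟩).Icc_to_Ici ht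
  suffices h : 0 < u' a from fun x hx => h.trans_le (hmono hal hx hx.1)
  have ha0 : 0 ≤ u' a := by
    by_contra! hneg
    have hmem : {t | u' t < 0} ∈ 𝓝[Icc a b] a := (hc' a hal).eventually (gt_mem_nhds hneg)
    rw [nhdsWithin_Icc_eq_nhdsGE hab] at hmem
    obtain ⟨w, hw, hsub⟩ := (mem_nhdsGE_iff_exists_Ico_subset' hab).1 hmem
    have hwlt : a < min w b := lt_min hw hab
    have hanti : StrictAntiOn u (Icc a (min w b)) := by
      refine strictAntiOn_of_hasDerivWithinAt_neg (f' := u') (convex_Icc _ _)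
        (hc.mono (Icc_subset_Icc_right (min_le_right _ _))) (fun s hs => ?_) fun s hs => ?_
      · exact (hd s (Icc_subset_Icc_right (min_le_right _ _) (interior_subset hs))).mono
          (interior_subset.trans (Icc_subset_Icc_right (min_le_right _ _)))
      · rw [interior_Icc] at hs
        exact hsub ⟨hs.1.le, hs.2.trans_le (min_le_left _ _)⟩
    have := hanti (left_mem_Icc.2 hwlt.le) (right_mem_Icc.2 hwlt.le) hwlt
    rw [hua] at this
    exact absurd (hnn _ ⟨hwlt.le, min_le_right _ _⟩) (not_le.2 this)
  refine lt_of_le_of_ne ha0 fun h0 => ?_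
  have hu'0 : ∀ t ∈ Icc a b, 0 ≤ u' t := fun t ht => ha0.trans (hmono hal ht ht.1)
  have huc : ContinuousOn (fun t => N (u t) t) (Icc a b) :=
    hN.continuous.comp_continuousOn (hc.prodMk continuousOn_id)
  obtain ⟨C, hC⟩ := isCompact_Icc.exists_bound_of_continuousOn huc
  have hbd : ∀ t ∈ Icc a b, 0 ≤ N (u t) t ∧ N (u t) t ≤ C := fun t ht =>
    ⟨(hH _ (hnn t ht) t ht).1, (le_abs_self _).trans (hC t ht)⟩
  have := right_deriv_gronwall (f := fun t => u t + u' t) (f' := fun t => u' t + u'' t)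
    (K := C + 1) hab.le (hc.add hc') (fun t ht => (hR t ht).add (hR' t ht))
    (fun t ht => add_nonneg (hnn t ht) (hu'0 t ht)) (fun t ht => ?_) fun t ht => ?_
  · simp only [hua, ← h0, hubv] at this
    have := hu'0 b hbr
    linarith
  · have ht' : t ∈ Icc a b := ⟨ht.1, ht.2.le⟩
    rw [heq t ht']
    exact add_nonneg (hu'0 t ht') (mul_nonneg (hbd t ht').1 (hnn t ht'))
  · have ht' : t ∈ Icc a b := ⟨ht.1, ht.2.le⟩
    rw [heq t ht', Ncal]
    have h1 := hnn t ht'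
    have h2 := hu'0 t ht'
    have h3 := hbd t ht'
    nlinarith [mul_nonneg (h3.1.trans h3.2) h2, mul_le_mul_of_nonneg_right h3.2 h1]

/-! ### Meshes -/

lemma exists_mesh_index {p : ℕ → ℝ} {n : ℕ} {x : ℝ} (h0 : p 0 ≤ x) (hn : x < p n) :
    ∃ i < n, p i ≤ x ∧ x < p (i + 1) := by
  induction n with
  | zero => exact absurd hn (not_lt.2 h0)
  | succ n ih =>
    by_cases h : x < p n
    · obtain ⟨i, hi, hx⟩ := ih h
      exact ⟨i, hi.trans n.lt_succ_self, hx⟩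
    · exact ⟨n, n.lt_succ_self, not_lt.1 h, hn⟩

lemma Mesh.pt_zero_le (m : Mesh) : ∀ i ≤ m.n, m.pt 0 ≤ m.pt i := by
  intro i
  induction i with
  | zero => exact fun _ => le_rfl
  | succ i ih => exact fun h => (ih (by omega)).trans (m.mono i (by omega)).le

lemma IsStraightSol.exists_right_second_deriv {N : ℝ → ℝ → ℝ} {a c : ℝ} {m : Mesh} {u u' : ℝ → ℝ}
    (hu : IsStraightSol N a c m u u') (h0 : m.pt 0 = a) (hn : m.pt m.n = c) :
    ∃ u'' : ℝ → ℝ, ∀ x ∈ Ico a c, HasDerivWithinAt u' (u'' x) (Ici x) x ∧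
      ∃ i < m.n, a ≤ m.pt i ∧ m.pt i ≤ x ∧ x < m.pt (i + 1) ∧
        u'' x = alphaC N (m.pt i) (u' (m.pt i)) (u (m.pt i)) x * u x := by
  have : ∀ x ∈ Ico a c, ∃ d, HasDerivWithinAt u' d (Ici x) x ∧
      ∃ i < m.n, a ≤ m.pt i ∧ m.pt i ≤ x ∧ x < m.pt (i + 1) ∧
        d = alphaC N (m.pt i) (u' (m.pt i)) (u (m.pt i)) x * u x := fun x hx => by
    obtain ⟨i, hi, h1, h2⟩ := exists_mesh_index (h0.le.trans hx.1) (hx.2.trans_le hn.ge)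
    exact ⟨_, (hu.2.2 i hi x ⟨h1, h2.le⟩).Icc_to_Ici ⟨h1, h2⟩, i, hi,
      h0.ge.trans (m.pt_zero_le i hi.le), h1, h2, rfl⟩
  choose! u'' h using this
  exact ⟨u'', h⟩

lemma IsInvSol.exists_right_second_deriv {N : ℝ → ℝ → ℝ} {ub s : ℝ} {m : Mesh} {X X' : ℝ → ℝ}
    (hX : IsInvSol N ub m s X X') (h0 : m.pt 0 = 0) (hn : m.pt m.n = ub) (hs : 0 ≤ s) :
    ∃ X'' : ℝ → ℝ, ∀ v ∈ Ico s ub, HasDerivWithinAt X' (X'' v) (Ici v) v ∧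
      ∃ i < m.n, s ≤ ubar m s i ∧ ubar m s i ≤ v ∧ v < ubar m s (i + 1) ∧
        X'' v = betaC N (ubar m s i) (X' (ubar m s i)) (X (ubar m s i)) v * (X' v) ^ 3 := by
  have : ∀ v ∈ Ico s ub, ∃ d, HasDerivWithinAt X' d (Ici v) v ∧
      ∃ i < m.n, s ≤ ubar m s i ∧ ubar m s i ≤ v ∧ v < ubar m s (i + 1) ∧
        d = betaC N (ubar m s i) (X' (ubar m s i)) (X (ubar m s i)) v * (X' v) ^ 3 := fun v hv => by
    obtain ⟨i, hi, h1, h2⟩ := exists_mesh_index (p := ubar m s) (n := m.n) (x := v)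
      (by rw [ubar, h0]; exact max_le (hs.trans hv.1) hv.1)
      (by rw [ubar, hn]; exact hv.2.trans_le (le_max_left _ _))
    exact ⟨_, (hX.2.2 i hi v ⟨h1, h2.le⟩).Icc_to_Ici ⟨h1, h2⟩, i, hi, le_max_right _ _, h1, h2, rfl⟩
  choose! Xdd h using this
  exact ⟨Xdd, h⟩

/-! ### Consistency of the schemes -/

lemma straight_residual_le {N : ℝ → ℝ → ℝ} {a b c ub M P h : ℝ} {m : Mesh} {u u' u'' : ℝ → ℝ}
    (hM : IsTaylorBound N 0 ub a b M) (hcb : c ≤ b)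
    (hu : IsStraightSol N a c m u u')
    (hu'' : ∀ x ∈ Ico a c, HasDerivWithinAt u' (u'' x) (Ici x) x ∧
      ∃ i < m.n, a ≤ m.pt i ∧ m.pt i ≤ x ∧ x < m.pt (i + 1) ∧
        u'' x = alphaC N (m.pt i) (u' (m.pt i)) (u (m.pt i)) x * u x)
    (hr : ∀ x ∈ Icc a c, u x ∈ Icc 0 ub) (hP1 : 1 ≤ P) (hP : ∀ x ∈ Icc a c, |u' x| ≤ P)
    (hstep : ∀ i < m.n, m.pt (i + 1) - m.pt i ≤ h) :
    ∀ x ∈ Ico a c, |u'' x - Ncal N (u x) x| ≤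
      ub * (2 * M * P ^ 2 + 2 * M * (((M * P + M) * (b - a) + M) * ub)) * h ^ 2 := by
  set D := ((M * P + M) * (b - a) + M) * ub with hD
  have hM0 := hM.pos
  have huc : ContinuousOn u (Icc a c) := fun t ht => (hu.1 t ht).continuousWithinAt
  have hD'' : ∀ x ∈ Ico a c, |u'' x| ≤ D := by
    intro x hx
    obtain ⟨-, i, -, hai, hix, -, heq⟩ := hu'' x hx
    have hi : m.pt i ∈ Icc a c := ⟨hai, hix.trans hx.2.le⟩
    have hib : m.pt i ∈ Icc a b := ⟨hai, hi.2.trans hcb⟩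
    have h1 := hM.abs_apply_le _ (hr _ hi) _ hib
    have h2 := hM.abs_pd1_le _ (hr _ hi) _ hib
    have h3 := hM.abs_pd2_le _ (hr _ hi) _ hib
    have h4 := hP _ hi
    have hx' := hr x ⟨hx.1, hx.2.le⟩
    have hk : |x - m.pt i| ≤ b - a := by
      rw [abs_of_nonneg (sub_nonneg.2 hix)]; linarith [hx.2]
    rw [heq, abs_mul, abs_of_nonneg hx'.1, alphaC, hD]
    have hba : 0 ≤ b - a := (abs_nonneg _).trans hk
    refine mul_le_mul ?_ hx'.2 hx'.1 (by positivity)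
    refine (abs_add_le _ _).trans (add_le_add ?_ h1)
    rw [abs_mul]
    refine mul_le_mul ((abs_add_le _ _).trans (add_le_add ?_ h3)) hk (abs_nonneg _) (by positivity)
    rw [abs_mul]
    exact mul_le_mul h2 h4 (abs_nonneg _) hM0.le
  intro x hx
  obtain ⟨-, i, hin, hai, hix, hxi, heq⟩ := hu'' x hx
  have hi : m.pt i ∈ Icc a c := ⟨hai, hix.trans hx.2.le⟩
  have hxc : x ∈ Icc a c := ⟨hx.1, hx.2.le⟩
  have hD0 : 0 ≤ D := (abs_nonneg _).trans (hD'' x hx)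
  have hk0 : 0 ≤ x - m.pt i := sub_nonneg.2 hix
  have hkh : (x - m.pt i) ^ 2 ≤ h ^ 2 := pow_le_pow_left₀ hk0 (by linarith [hstep i hin]) 2
  have hcurve := hM.along_curve (q := u (m.pt i)) (y := m.pt i) (q' := u x) (y' := x)
    (p₁ := u' (m.pt i)) (p₂ := 1) (k := x - m.pt i) (P := P) (D := D)
    (hr _ hi) ⟨hai, hi.2.trans hcb⟩ (hr x hxc) ⟨hx.1, hx.2.le.trans hcb⟩
    (abs_sub_le_of_abs_right_deriv_le huc
      (fun t ht => (hu.1 t ⟨ht.1, ht.2.le⟩).Icc_to_Ici ht) (fun t ht => hP t ⟨ht.1, ht.2.le⟩)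
      hai hix hx.2.le)
    (by rw [abs_of_nonneg hk0]; exact le_mul_of_one_le_left hk0 hP1)
    (abs_taylor_le_of_right_deriv hu.1 hu.2.1 (fun t ht => (hu'' t ht).1) hD'' hai hix hx.2.le)
    (by rw [one_mul, sub_self, abs_zero]; positivity)
  rw [mul_one] at hcurve
  have hx' := hr x hxc
  calc |u'' x - Ncal N (u x) x|
      = |(pd1 N (u (m.pt i)) (m.pt i) * u' (m.pt i) + pd2 N (u (m.pt i)) (m.pt i)) *
          (x - m.pt i) + N (u (m.pt i)) (m.pt i) - N (u x) x| * u x := by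
        rw [heq, Ncal, ← sub_mul, abs_mul, abs_of_nonneg hx'.1, alphaC]
    _ ≤ ((2 * M * P ^ 2 + 2 * M * D) * h ^ 2) * ub := by
        refine mul_le_mul (hcurve.trans ?_) hx'.2 hx'.1 (by positivity)
        exact mul_le_mul_of_nonneg_left hkh (by positivity)
    _ = _ := by ring

lemma inverse_residual_le {N : ℝ → ℝ → ℝ} {a b ub s M Q h : ℝ} {m : Mesh} {X X' X'' : ℝ → ℝ}
    (hM : IsTaylorBound (Ncal N) 0 ub a b M) (hs : 0 ≤ s)
    (hX : IsInvSol N ub m s X X')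
    (hX'' : ∀ v ∈ Ico s ub, HasDerivWithinAt X' (X'' v) (Ici v) v ∧
      ∃ i < m.n, s ≤ ubar m s i ∧ ubar m s i ≤ v ∧ v < ubar m s (i + 1) ∧
        X'' v = betaC N (ubar m s i) (X' (ubar m s i)) (X (ubar m s i)) v * (X' v) ^ 3)
    (hr : ∀ v ∈ Icc s ub, X v ∈ Icc a b) (hQ1 : 1 ≤ Q)
    (hQ : ∀ v ∈ Icc s ub, 0 < X' v ∧ X' v ≤ Q)
    (hstep : ∀ i < m.n, ubar m s (i + 1) - ubar m s i ≤ h) :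
    ∀ v ∈ Ico s ub, |-X'' v / X' v ^ 3 - Ncal N v (X v)| ≤
      (2 * M * Q ^ 2 + 2 * M * (((M + M * Q) * ub + M) * Q ^ 3)) * h ^ 2 := by
  set D := ((M + M * Q) * ub + M) * Q ^ 3 with hD
  have hM0 := hM.pos
  have hXc : ContinuousOn X (Icc s ub) := fun t ht => (hX.1 t ht).continuousWithinAt
  have hQabs : ∀ v ∈ Icc s ub, |X' v| ≤ Q := fun v hv => by
    rw [abs_of_pos (hQ v hv).1]; exact (hQ v hv).2
  have hD'' : ∀ v ∈ Ico s ub, |X'' v| ≤ D := by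
    intro v hv
    obtain ⟨-, i, -, hsi, hiv, -, heq⟩ := hX'' v hv
    have hi : ubar m s i ∈ Icc s ub := ⟨hsi, hiv.trans hv.2.le⟩
    have hi0 : ubar m s i ∈ Icc 0 ub := ⟨hs.trans hsi, hi.2⟩
    have h1 := hM.abs_apply_le _ hi0 _ (hr _ hi)
    have h2 := hM.abs_pd1_le _ hi0 _ (hr _ hi)
    have h3 := hM.abs_pd2_le _ hi0 _ (hr _ hi)
    have h4 := hQabs _ hi
    have hv' := hQ v ⟨hv.1, hv.2.le⟩
    have hub : 0 ≤ ub := hi0.1.trans hi0.2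
    have hk : |v - ubar m s i| ≤ ub := by
      rw [abs_of_nonneg (sub_nonneg.2 hiv)]; linarith [hv.2, hi0.1]
    rw [heq, abs_mul, abs_of_pos (pow_pos hv'.1 3), betaC, hD]
    refine mul_le_mul ?_ (pow_le_pow_left₀ hv'.1.le hv'.2 3) (pow_pos hv'.1 3).le (by positivity)
    refine (abs_sub _ _).trans (add_le_add ?_ h1)
    rw [abs_mul, abs_neg]
    refine mul_le_mul ((abs_add_le _ _).trans (add_le_add h2 ?_)) hk (abs_nonneg _) (by positivity)
    rw [abs_mul]
    exact mul_le_mul h3 h4 (abs_nonneg _) hM0.le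
  intro v hv
  obtain ⟨-, i, hin, hsi, hiv, hvi, heq⟩ := hX'' v hv
  have hi : ubar m s i ∈ Icc s ub := ⟨hsi, hiv.trans hv.2.le⟩
  have hvc : v ∈ Icc s ub := ⟨hv.1, hv.2.le⟩
  have hD0 : 0 ≤ D := (abs_nonneg _).trans (hD'' v hv)
  have hk0 : 0 ≤ v - ubar m s i := sub_nonneg.2 hiv
  have hkh : (v - ubar m s i) ^ 2 ≤ h ^ 2 := pow_le_pow_left₀ hk0 (by linarith [hstep i hin]) 2
  have hcurve := hM.along_curve (q := ubar m s i) (y := X (ubar m s i)) (q' := v) (y' := X v)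
    (p₁ := 1) (p₂ := X' (ubar m s i)) (k := v - ubar m s i) (P := Q) (D := D)
    ⟨hs.trans hsi, hi.2⟩ (hr _ hi) ⟨hs.trans hv.1, hv.2.le⟩ (hr v hvc)
    (by rw [abs_of_nonneg hk0]; exact le_mul_of_one_le_left hk0 hQ1)
    (abs_sub_le_of_abs_right_deriv_le hXc
      (fun t ht => (hX.1 t ⟨ht.1, ht.2.le⟩).Icc_to_Ici ht) (fun t ht => hQabs t ⟨ht.1, ht.2.le⟩)
      hsi hiv hv.2.le)
    (by rw [one_mul, sub_self, abs_zero]; positivity)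
    (abs_taylor_le_of_right_deriv hX.1 hX.2.1 (fun t ht => (hX'' t ht).1) hD'' hsi hiv hv.2.le)
  rw [mul_one] at hcurve
  have hv3 : X' v ^ 3 ≠ 0 := (pow_pos (hQ v hvc).1 3).ne'
  refine le_trans (le_of_eq ?_) (hcurve.trans (mul_le_mul_of_nonneg_left hkh (by positivity)))
  rw [heq, neg_div, mul_div_cancel_right₀ _ hv3, betaC]
  congr 1
  ring

lemma inverse_growth_le {N : ℝ → ℝ → ℝ} {a b ub s M₁ M₂ : ℝ} {m : Mesh} {X X' X'' : ℝ → ℝ}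
    (hM₁ : IsTaylorBound N 0 ub a b M₁) (hM₂ : IsTaylorBound (Ncal N) 0 ub a b M₂) (hs : 0 ≤ s)
    (hX'' : ∀ v ∈ Ico s ub, HasDerivWithinAt X' (X'' v) (Ici v) v ∧
      ∃ i < m.n, s ≤ ubar m s i ∧ ubar m s i ≤ v ∧ v < ubar m s (i + 1) ∧
        X'' v = betaC N (ubar m s i) (X' (ubar m s i)) (X (ubar m s i)) v * (X' v) ^ 3)
    (hr : ∀ v ∈ Icc s ub, X v ∈ Icc a b) (hpos : ∀ v ∈ Icc s ub, 0 < X' v)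
    (hconc : ∀ v ∈ Icc s ub, v * X' v ≤ b - a) :
    ∀ v ∈ Ico s ub, -X'' v / X' v ^ 3 ≤ (M₂ + M₁ * (b - a) + M₁) * v := by
  intro v hv
  obtain ⟨-, i, -, hsi, hiv, -, heq⟩ := hX'' v hv
  have hi : ubar m s i ∈ Icc s ub := ⟨hsi, hiv.trans hv.2.le⟩
  have hi0 : ubar m s i ∈ Icc 0 ub := ⟨hs.trans hsi, hi.2⟩
  have hv3 : X' v ^ 3 ≠ 0 := (pow_pos (hpos v ⟨hv.1, hv.2.le⟩) 3).ne'
  rw [heq, neg_div, mul_div_cancel_right₀ _ hv3, betaC, pd2_Ncal]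
  have h1 := (le_abs_self _).trans (hM₁.abs_apply_le _ hi0 _ (hr _ hi))
  have h2 := (le_abs_self _).trans (hM₂.abs_pd1_le _ hi0 _ (hr _ hi))
  have h3 := (le_abs_self _).trans (hM₁.abs_pd2_le _ hi0 _ (hr _ hi))
  have hw0 : 0 ≤ ubar m s i * X' (ubar m s i) := mul_nonneg hi0.1 (hpos _ hi).le
  have hk0 : 0 ≤ v - ubar m s i := sub_nonneg.2 hiv
  have hkv : v - ubar m s i ≤ v := by linarith [hi0.1]
  have hba : 0 ≤ b - a := hw0.trans (hconc _ hi)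
  have e1 : pd1 (Ncal N) (ubar m s i) (X (ubar m s i)) * (v - ubar m s i) ≤ M₂ * v :=
    mul_le_mul h2 hkv hk0 hM₂.pos.le
  have e2 : pd2 N (ubar m s i) (X (ubar m s i)) * (ubar m s i * X' (ubar m s i)) *
      (v - ubar m s i) ≤ M₁ * (b - a) * v :=
    mul_le_mul (mul_le_mul h3 (hconc _ hi) hw0 hM₁.pos.le) hkv hk0 (mul_nonneg hM₁.pos.le hba)
  have e3 : N (ubar m s i) (X (ubar m s i)) * ubar m s i ≤ M₁ * v :=
    mul_le_mul h1 hiv hi0.1 hM₁.pos.le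
  rw [Ncal]
  linarith

/-! ### Gluing and stability -/

lemma exists_glue {f f' f'' g g' g'' : ℝ → ℝ} {a b c : ℝ} (hac : a < c) (hcb : c < b)
    (hf : ∀ x ∈ Icc a c, HasDerivWithinAt f (f' x) (Icc a c) x)
    (hf'c : ContinuousOn f' (Icc a c))
    (hf'' : ∀ x ∈ Ico a c, HasDerivWithinAt f' (f'' x) (Ici x) x)
    (hg : ∀ x ∈ Icc c b, HasDerivWithinAt g (g' x) (Icc c b) x)
    (hg'c : ContinuousOn g' (Icc c b))
    (hg'' : ∀ x ∈ Ico c b, HasDerivWithinAt g' (g'' x) (Ici x) x)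
    (h0 : f c = g c) (h1 : f' c = g' c) :
    ∃ U U' U'' : ℝ → ℝ, (∀ x ∈ Icc a b, HasDerivWithinAt U (U' x) (Icc a b) x) ∧
      ContinuousOn U' (Icc a b) ∧
      (∀ x ∈ Ico a b, HasDerivWithinAt U' (U'' x) (Ici x) x) ∧
      (∀ x ∈ Icc a c, U x = f x ∧ U' x = f' x) ∧
      (∀ x ∈ Icc c b, U x = g x ∧ U' x = g' x) ∧
      (∀ x ∈ Ico a c, U'' x = f'' x) ∧ (∀ x ∈ Ico c b, U'' x = g'' x) := by
  set U : ℝ → ℝ := fun x => if x ≤ c then f x else g x with hU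
  set U' : ℝ → ℝ := fun x => if x ≤ c then f' x else g' x with hU'
  set U'' : ℝ → ℝ := fun x => if x < c then f'' x else g'' x with hU''
  have hUl : ∀ x ≤ c, U x = f x ∧ U' x = f' x := fun x hx => by simp [hU, hU', hx]
  have hUr : ∀ x ≥ c, U x = g x ∧ U' x = g' x := fun x hx => by
    rcases eq_or_lt_of_le hx with rfl | hlt
    · simp [hU, hU', h0, h1]
    · simp [hU, hU', not_le.2 hlt]
  have hun : Icc a b = Icc a c ∪ Icc c b := (Icc_union_Icc_eq_Icc hac.le hcb.le).symm
  refine ⟨U, U', U'', fun x hx => ?_, ?_, fun x hx => ?_, fun x hx => hUl x hx.2,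
    fun x hx => hUr x hx.1, fun x hx => if_pos hx.2, fun x hx => if_neg (not_lt.2 hx.1)⟩
  · rw [hun]
    refine HasDerivWithinAt.union ?_ ?_
    · by_cases h : x ≤ c
      · rw [(hUl x h).2]
        exact (hf x ⟨hx.1, h⟩).congr (fun y hy => (hUl y hy.2).1) (hUl x h).1
      · exact HasFDerivWithinAt.of_notMem_closure (by
          rw [isClosed_Icc.closure_eq]; exact fun h' => h h'.2)
    · by_cases h : c ≤ x
      · rw [(hUr x h).2]
        exact (hg x ⟨h, hx.2⟩).congr (fun y hy => (hUr y hy.1).1) (hUr x h).1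
      · exact HasFDerivWithinAt.of_notMem_closure (by
          rw [isClosed_Icc.closure_eq]; exact fun h' => h h'.1)
  · rw [hun]
    exact (hf'c.congr fun y hy => (hUl y hy.2).2).union_of_isClosed
      (hg'c.congr fun y hy => (hUr y hy.1).2) isClosed_Icc isClosed_Icc
  · by_cases h : x < c
    · rw [hU'']
      simp only [h, if_true]
      refine (hf'' x ⟨hx.1, h⟩).congr_of_eventuallyEq ?_ (hUl x h.le).2
      exact nhdsWithin_le_nhds
        (mem_of_superset (Iio_mem_nhds h) fun y hy => (hUl y (le_of_lt hy)).2)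
    · rw [hU'']
      simp only [h, if_false]
      have hcx := not_lt.1 h
      exact (hg'' x ⟨hcx, hx.2⟩).congr (fun y hy => (hUr y (hcx.trans hy)).2) (hUr x hcx).2

/-- Comparison of approximate solutions of `w'' = 𝒩(w, x)` with the same boundary values. -/
lemma sub_le_of_approx_solutions {G : ℝ → ℝ → ℝ} {f f' f'' g g' g'' : ℝ → ℝ} {a b R : ℝ}
    (hG : ∀ x ∈ Icc a b, Monotone fun t => G t x) (hR : 0 ≤ R)
    (hf : ∀ x ∈ Icc a b, HasDerivWithinAt f (f' x) (Icc a b) x)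
    (hf'' : ∀ x ∈ Ico a b, HasDerivWithinAt f' (f'' x) (Ici x) x)
    (hg : ∀ x ∈ Icc a b, HasDerivWithinAt g (g' x) (Icc a b) x)
    (hg'' : ∀ x ∈ Ico a b, HasDerivWithinAt g' (g'' x) (Ici x) x)
    (hdiff : ∀ x ∈ Ico a b, G (f x) x - G (g x) x - R ≤ f'' x - g'' x)
    (ha : f a = g a) (hb : f b = g b) {x : ℝ} (hx : x ∈ Icc a b) :
    f x - g x ≤ R * (b - a) ^ 2 := by
  have hψ : ∀ t ∈ Icc a b, 0 ≤ R / 2 * ((t - a) * (b - t)) := fun t ht =>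
    mul_nonneg (by linarith) (mul_nonneg (sub_nonneg.2 ht.1) (sub_nonneg.2 ht.2))
  have := nonpos_of_right_second_deriv_nonneg
    (z := fun t => f t - g t - R / 2 * ((t - a) * (b - t)))
    (z' := fun t => f' t - g' t - R / 2 * (a + b - 2 * t)) (l := a) (r := b) ?_ ?_
    (by simp [ha]) (by simp [hb]) hx
  · have h1 : (x - a) * (b - x) ≤ (b - a) * (b - a) :=
      mul_le_mul (by linarith [hx.2]) (by linarith [hx.1]) (sub_nonneg.2 hx.2)
        (by linarith [hx.1, hx.2])
    nlinarith [mul_le_mul_of_nonneg_left h1 hR, mul_nonneg hR (sq_nonneg (b - a))]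
  · intro t ht
    refine ((hf t ht).sub (hg t ht)).sub (HasDerivAt.hasDerivWithinAt ?_)
    refine HasDerivAt.congr_deriv ((((hasDerivAt_id' t).sub_const a).mul
      ((hasDerivAt_id' t).const_sub b)).const_mul (R / 2)) ?_
    ring
  · intro t ht hpos
    have ht' : t ∈ Ico a b := ⟨ht.1.le, ht.2⟩
    have htc : t ∈ Icc a b := ⟨ht.1.le, ht.2.le⟩
    refine ⟨f'' t - g'' t + R, ?_, ?_⟩
    · have := hG t htc (show g t ≤ f t by linarith [hψ t htc])
      linarith [hdiff t ht', show G (g t) t ≤ G (f t) t from this]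
    · refine (((hf'' t ht').sub (hg'' t ht')).sub (HasDerivAt.hasDerivWithinAt
        (((hasDerivAt_id' t).const_mul 2).const_sub (a + b) |>.const_mul (R / 2)))).congr_deriv ?_
      ring

/-- Stability of the boundary value problem: an approximate solution with residual at most `R` is
within a multiple of `R` of the exact solution in the `C¹`-norm. -/
lemma IsStraightBVP.stability {N : ℝ → ℝ → ℝ} {a b ub M R : ℝ} {u u' u'' U U' U'' : ℝ → ℝ}
    (hab : a < b) (hM : IsTaylorBound (Ncal N) 0 ub a b M)
    (hG : ∀ x ∈ Icc a b, Monotone fun t => Ncal N t x)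
    (hu : IsStraightBVP N a b ub u u' u'') (hur : ∀ x ∈ Icc a b, u x ∈ Icc 0 ub) (hR : 0 ≤ R)
    (hU : ∀ x ∈ Icc a b, HasDerivWithinAt U (U' x) (Icc a b) x)
    (hU'c : ContinuousOn U' (Icc a b))
    (hU'' : ∀ x ∈ Ico a b, HasDerivWithinAt U' (U'' x) (Ici x) x)
    (hUr : ∀ x ∈ Icc a b, U x ∈ Icc 0 ub)
    (hres : ∀ x ∈ Ico a b, |U'' x - Ncal N (U x) x| ≤ R) (ha : U a = 0) (hb : U b = ub) :
    ∀ x ∈ Icc a b, |u x - U x| ≤ (b - a) ^ 2 * R ∧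
      |u' x - U' x| ≤ 2 * (b - a) * (M * (b - a) ^ 2 + 1) * R := by
  obtain ⟨⟨hd, hd', -⟩, heq, hua, hubv⟩ := hu
  have hR'' : ∀ t ∈ Ico a b, HasDerivWithinAt u' (u'' t) (Ici t) t := fun t ht =>
    (hd' t ⟨ht.1, ht.2.le⟩).Icc_to_Ici ht
  have habs : ∀ x ∈ Icc a b, |u x - U x| ≤ (b - a) ^ 2 * R := by
    intro x hx
    have h1 := sub_le_of_approx_solutions hG hR hd hR'' hU hU'' (fun t ht => by
      have := abs_le.1 (hres t ht)
      rw [heq t ⟨ht.1, ht.2.le⟩]; linarith) (hua.trans ha.symm) (hubv.trans hb.symm) hx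
    have h2 := sub_le_of_approx_solutions hG hR hU hU'' hd hR'' (fun t ht => by
      have := abs_le.1 (hres t ht)
      rw [heq t ⟨ht.1, ht.2.le⟩]; linarith) (ha.trans hua.symm) (hb.trans hubv.symm) hx
    rw [abs_le]
    constructor <;> linarith
  have hdc : ContinuousOn (fun t => u t - U t) (Icc a b) :=
    fun t ht => ((hd t ht).sub (hU t ht)).continuousWithinAt
  obtain ⟨τ, hτ, hτ0⟩ := exists_hasDerivAt_eq_zero (f := fun t => u t - U t)
    (f' := fun t => u' t - U' t) hab hdc (by simp [hua, ha, hubv, hb]) (fun t ht =>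
      ((hd t ⟨ht.1.le, ht.2.le⟩).sub (hU t ⟨ht.1.le, ht.2.le⟩)).hasDerivAt
        (Icc_mem_nhds ht.1 ht.2))
  set C := (M * (b - a) ^ 2 + 1) * R with hC
  have hC0 : 0 ≤ C := by have := hM.pos; positivity
  have hbound : ∀ t ∈ Ico a b, |u'' t - U'' t| ≤ C := by
    intro t ht
    have htc : t ∈ Icc a b := ⟨ht.1, ht.2.le⟩
    rw [heq t htc]
    have h1 := hM.lip _ (hUr t htc) _ (hur t htc) t htc
    have h2 := hres t ht
    have h3 := mul_le_mul_of_nonneg_left (habs t htc) hM.pos.le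
    rw [abs_sub_comm] at h2
    calc _ = |(Ncal N (u t) t - Ncal N (U t) t) + (Ncal N (U t) t - U'' t)| := by congr 1; ring
      _ ≤ _ := abs_add_le _ _
      _ ≤ C := by rw [hC]; linarith
  have hlip : ∀ t ∈ Icc a b, |(u' t - U' t) - (u' a - U' a)| ≤ C * (b - a) := fun t ht =>
    (abs_sub_le_of_abs_right_deriv_le (f := fun t => u' t - U' t) (f' := fun t => u'' t - U'' t)
      (ContinuousOn.sub (fun t ht => (hd' t ht).continuousWithinAt) hU'c)
      (fun t ht => (hR'' t ht).sub (hU'' t ht)) hbound le_rfl ht.1 ht.2).trans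
      (mul_le_mul_of_nonneg_left (by linarith [ht.2]) hC0)
  refine fun x hx => ⟨habs x hx, ?_⟩
  have h1 := abs_le.1 (hlip x hx)
  have h2 := abs_le.1 (hlip τ ⟨hτ.1.le, hτ.2.le⟩)
  rw [hτ0] at h2
  rw [show 2 * (b - a) * (M * (b - a) ^ 2 + 1) * R = 2 * (C * (b - a)) by rw [hC]; ring, abs_le]
  constructor <;> linarith

/-! ### Reconstruction of a global approximate solution from a scheme pair -/

/-- A scheme pair satisfying the sign inequalities yields, after inverting its second component, a
`C¹` function on `[a, b]` which solves the boundary value problem up to a residual of order `h²`. -/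
lemma exists_reconstruction {N : ℝ → ℝ → ℝ} {a b c ub : ℝ} (hub : 0 < ub) (hac : a < c)
    (hcb : c < b) (hN : ContDiff ℝ 2 (Function.uncurry N)) (hH : HypH N a b) :
    ∃ K δ₀ : ℝ, 0 < K ∧ 0 < δ₀ ∧ ∀ ms mi : Mesh,
      ms.pt 0 = a → ms.pt ms.n = c → mi.pt 0 = 0 → mi.pt mi.n = ub →
      ∀ ut ut' X X' : ℝ → ℝ, GoodPair N a b c ub ms mi ut ut' X X' →
      ∀ h : ℝ, StepLe ms mi (ut c) h →
      ∃ U U' U'' : ℝ → ℝ, (∀ x ∈ Icc a b, HasDerivWithinAt U (U' x) (Icc a b) x) ∧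
        ContinuousOn U' (Icc a b) ∧
        (∀ x ∈ Ico a b, HasDerivWithinAt U' (U'' x) (Ici x) x) ∧
        (∀ x ∈ Icc a b, U x ∈ Icc 0 ub) ∧
        (∀ x ∈ Ico a b, |U'' x - Ncal N (U x) x| ≤ K * h ^ 2) ∧ U a = 0 ∧ U b = ub ∧
        (∀ x ∈ Icc a c, U x = ut x ∧ U' x = ut' x) ∧
        (∀ v ∈ Icc (ut c) ub, 0 ≤ v ∧ X v ∈ Icc a b ∧ U (X v) = v ∧ U' (X v) = 1 / X' v ∧
          0 < X' v ∧ δ₀ ≤ 1 / X' v) := by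
  obtain ⟨M₁, hM₁⟩ := exists_isTaylorBound hN 0 ub a b
  obtain ⟨M₂, hM₂⟩ := exists_isTaylorBound (contDiff_uncurry_Ncal hN) 0 ub a b
  have hM₁0 := hM₁.pos
  have hM₂0 := hM₂.pos
  have hba : 0 < b - a := by linarith
  have hbc : 0 < b - c := by linarith
  have hca : 0 < c - a := by linarith
  set P := 1 + ub / (b - c) with hP
  set C := M₂ + M₁ * (b - a) + M₁ with hC
  set E := Real.exp ((C + 1) * (b - c)) with hE
  set δ₀ := ub / ((1 + (c - a)) * E) with hδ₀
  have hE0 : 0 < E := Real.exp_pos _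
  have hδ₀pos : 0 < δ₀ := by positivity
  set Q := 1 + 1 / δ₀ with hQ
  have hP1 : 1 ≤ P := le_add_of_nonneg_right (by positivity)
  have hQ1 : 1 ≤ Q := le_add_of_nonneg_right (by positivity)
  have hC0 : 0 < C := by positivity
  set KS := ub * (2 * M₁ * P ^ 2 + 2 * M₁ * (((M₁ * P + M₁) * (b - a) + M₁) * ub)) with hKS
  set KI := 2 * M₂ * Q ^ 2 + 2 * M₂ * (((M₂ + M₂ * Q) * ub + M₂) * Q ^ 3) with hKI
  have hKS0 : 0 < KS := by positivity
  have hKI0 : 0 < KI := by positivity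
  refine ⟨KS + KI, δ₀, by positivity, hδ₀pos, ?_⟩
  intro ms mi hms0 hmsn hmi0 hmin ut ut' X X' hgood h hstep
  obtain ⟨⟨hS, hta, hs0, hsub, -, hI, hXub, hXs, hX's⟩, hpos, hsgn, hposX, hsgnX⟩ := hgood
  set s := ut c with hs
  have hcc : c ∈ Icc a c := right_mem_Icc.2 hac.le
  have haa : a ∈ Icc a c := left_mem_Icc.2 hac.le
  have hss : s ∈ Icc s ub := left_mem_Icc.2 hsub.le
  have hδ : 0 < ut' c := (hpos c ⟨hac, le_rfl⟩).2.2
  -- the straight part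
  obtain ⟨ut'', hut''⟩ := hS.exists_right_second_deriv hms0 hmsn
  have hutr : ∀ x ∈ Icc a c, ut x ∈ Icc 0 ub := fun x hx => by
    rcases hx.1.eq_or_lt with rfl | hlt
    · rw [hta]; exact ⟨le_rfl, hub.le⟩
    · exact ⟨(hpos x ⟨hlt, hx.2⟩).1.le, (hpos x ⟨hlt, hx.2⟩).2.1.le⟩
  have hut''0 : ∀ x ∈ Ico a c, 0 ≤ ut'' x := fun x hx => by
    obtain ⟨-, i, hi, -, hix, hxi, heq⟩ := hut'' x hx
    rw [heq]
    rcases hx.1.eq_or_lt with rfl | hlt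
    · rw [hta, mul_zero]
    · exact hsgn i hi x ⟨hix, hxi.le⟩ ⟨hlt, hx.2.le⟩
  have hutmono : MonotoneOn ut' (Icc a c) :=
    monotoneOn_of_right_deriv_nonneg hS.2.1 (fun x hx => (hut'' x hx).1) hut''0
  have hut'0 : ∀ x ∈ Icc a c, 0 ≤ ut' x := fun x hx => by
    refine le_trans ?_ (hutmono haa hx hx.1)
    have : (𝓝[Ioc a c] a).NeBot := left_nhdsWithin_Ioc_neBot hac
    exact ge_of_tendsto ((hS.2.1 a haa).mono Ioc_subset_Icc_self)
      (eventually_nhdsWithin_of_forall fun y hy => (hpos y hy).2.2.le)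
  have hsδ : s ≤ ut' c * (c - a) := by
    have := sub_le_of_right_deriv_le (fun t ht => (hS.1 t ht).continuousWithinAt)
      (fun t ht => (hS.1 t ⟨ht.1, ht.2.le⟩).Icc_to_Ici ht)
      (fun t ht => hutmono ⟨ht.1, ht.2.le⟩ hcc ht.2.le) le_rfl hac.le le_rfl
    rwa [hta, sub_zero] at this
  -- the inverse part
  obtain ⟨X'', hX''⟩ := hI.exists_right_second_deriv hmi0 hmin hs0.le
  have hX'pos : ∀ v ∈ Icc s ub, 0 < X' v := fun v hv => by
    rcases hv.1.eq_or_lt with h0 | hlt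
    · rw [← h0, hX's]; positivity
    · exact (hposX v ⟨hlt, hv.2⟩).2
  have hX''0 : ∀ v ∈ Ico s ub, X'' v ≤ 0 := fun v hv => by
    obtain ⟨-, i, hi, hsi, hiv, hvi, heq⟩ := hX'' v hv
    rw [heq]
    rcases hv.1.eq_or_lt with h0 | hlt
    · have hi' : ubar mi s i = s := le_antisymm (hiv.trans h0.ge) hsi
      rw [hi', ← h0, betaC, sub_self, mul_zero, zero_sub, hXs, Ncal, neg_mul, Left.neg_nonpos_iff]
      have h1 := (hH s hs0.le c ⟨hac.le, hcb.le⟩).1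
      have h2 := hX'pos s hss
      positivity
    · exact hsgnX i hi v ⟨hiv, hvi.le⟩ ⟨hlt, hv.2.le⟩
  have hXc : ContinuousOn X (Icc s ub) := fun t ht => (hI.1 t ht).continuousWithinAt
  have hXR : ∀ v ∈ Ico s ub, HasDerivWithinAt X (X' v) (Ici v) v := fun v hv =>
    (hI.1 v ⟨hv.1, hv.2.le⟩).Icc_to_Ici hv
  have hX'anti : ∀ v ∈ Icc s ub, X' v ≤ X' s := fun v hv => by
    have := sub_le_of_right_deriv_le hI.2.1 (fun v hv => (hX'' v hv).1) hX''0 le_rfl hv.1 hv.2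
    linarith
  obtain ⟨Y, hYl, hYr, hYd, hY'c, hY''⟩ := exists_inverse_with_right_second_deriv hsub.le
    hI.1 hI.2.1 hX'pos (fun v hv => (hX'' v hv).1)
  rw [hXs, hXub] at hYl hYr hYd hY'c hY''
  have hYc : Y c = s := by rw [← hXs]; exact (hYl s hss).2
  have hYb : Y b = ub := by rw [← hXub]; exact (hYl ub (right_mem_Icc.2 hsub.le)).2
  have hXr : ∀ v ∈ Icc s ub, X v ∈ Icc a b := fun v hv =>
    ⟨hac.le.trans (hYl v hv).1.1, (hYl v hv).1.2⟩
  have hδP : ut' c ≤ P := by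
    have h1 := sub_le_of_right_deriv_le hXc hXR (fun v hv => hX'anti v ⟨hv.1, hv.2.le⟩)
      le_rfl hsub.le le_rfl
    rw [hXs, hXub, hX's, one_div_mul_eq_div, le_div_iff₀ hδ] at h1
    have h2 : ut' c ≤ ub / (b - c) := by rw [le_div_iff₀ hbc]; linarith
    linarith
  have hconc : ∀ v ∈ Icc s ub, v * X' v ≤ b - a := fun v hv => by
    have h1 := sub_le_of_right_deriv_le (f := fun w => w * X' w - X w)
      (f' := fun w => w * X'' w) (C := 0)
      ((continuousOn_id.mul hI.2.1).sub hXc)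
      (fun w hw => (((hasDerivWithinAt_id w _).mul (hX'' w hw).1).sub (hXR w hw)).congr_deriv
        (by simp))
      (fun w hw => mul_nonpos_of_nonneg_of_nonpos (hs0.le.trans hw.1) (hX''0 w hw))
      le_rfl hv.1 hv.2
    have h2 : s * X' s ≤ c - a := by
      rw [hX's, mul_one_div, div_le_iff₀ hδ]
      linarith
    have h3 := (hXr v hv).2
    simp only [hXs] at h1
    linarith
  have hgrow := inverse_growth_le hM₁ hM₂ hs0.le hX'' hXr hX'pos hconc
  have hYnn : ∀ t ∈ Icc c b, 0 ≤ Y t := fun t ht => hs0.le.trans (hYr t ht).1.1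
  have hY'nn : ∀ t ∈ Icc c b, 0 ≤ 1 / X' (Y t) := fun t ht =>
    one_div_nonneg.2 (hX'pos _ (hYr t ht).1).le
  have hY''nn : ∀ t ∈ Ico c b, 0 ≤ -X'' (Y t) / X' (Y t) ^ 3 := fun t ht =>
    div_nonneg (neg_nonneg.2 (hX''0 _ (hY'' t ht).1))
      (pow_nonneg (hX'pos _ (hYr t ⟨ht.1, ht.2.le⟩).1).le 3)
  have hδδ₀ : δ₀ ≤ ut' c := by
    have h1 := right_deriv_gronwall (f := fun t => Y t + 1 / X' (Y t))
      (f' := fun t => 1 / X' (Y t) + -X'' (Y t) / X' (Y t) ^ 3) (K := C + 1) hcb.le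
      (ContinuousOn.add (fun t ht => (hYd t ht).continuousWithinAt) hY'c)
      (fun t ht => ((hYd t ⟨ht.1, ht.2.le⟩).Icc_to_Ici ht).add (hY'' t ht).2)
      (fun t ht => add_nonneg (hYnn t ht) (hY'nn t ht))
      (fun t ht => add_nonneg (hY'nn t ⟨ht.1, ht.2.le⟩) (hY''nn t ht))
      (fun t ht => by
        have h2 := hgrow _ (hY'' t ht).1
        have h3 := hYnn t ⟨ht.1, ht.2.le⟩
        have h4 := mul_nonneg hC0.le (hY'nn t ⟨ht.1, ht.2.le⟩)
        linarith)
    have h2 := hY'nn b (right_mem_Icc.2 hcb.le)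
    simp only [hYc, hX's, one_div_one_div, ← hE] at h1
    rw [hYb] at h1 h2
    rw [hδ₀, div_le_iff₀ (by positivity)]
    calc ub ≤ (s + ut' c) * E := by linarith
      _ ≤ (ut' c * (c - a) + ut' c) * E := by gcongr
      _ = _ := by ring
  have hX'le : ∀ v ∈ Icc s ub, X' v ≤ 1 / δ₀ := fun v hv =>
    (hX'anti v hv).trans (by rw [hX's]; exact one_div_le_one_div_of_le hδ₀pos hδδ₀)
  have hresS := straight_residual_le hM₁ hcb.le hS hut'' hutr hP1
    (fun x hx => by
      rw [abs_of_nonneg (hut'0 x hx)]; exact (hutmono hx hcc hx.2).trans hδP) hstep.1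
  have hresI := inverse_residual_le hM₂ hs0.le hI hX'' hXr hQ1
    (fun v hv => ⟨hX'pos v hv, (hX'le v hv).trans (by linarith)⟩) hstep.2
  obtain ⟨U, U', U'', hU, hU'c, hU'', hUl, hUr, hUl'', hUr''⟩ := exists_glue hac hcb hS.1 hS.2.1
    (fun x hx => (hut'' x hx).1) hYd hY'c (fun t ht => (hY'' t ht).2) hYc.symm
    (by rw [hYc, hX's, one_div_one_div])
  refine ⟨U, U', U'', hU, hU'c, hU'', fun x hx => ?_, fun x hx => ?_, ?_, ?_, hUl, fun v hv => ?_⟩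
  · rcases le_total x c with hxc | hxc
    · rw [(hUl x ⟨hx.1, hxc⟩).1]; exact hutr x ⟨hx.1, hxc⟩
    · rw [(hUr x ⟨hxc, hx.2⟩).1]
      exact ⟨hYnn x ⟨hxc, hx.2⟩, (hYr x ⟨hxc, hx.2⟩).1.2⟩
  · have hh := sq_nonneg h
    rcases lt_or_ge x c with hxc | hxc
    · rw [hUl'' x ⟨hx.1, hxc⟩, (hUl x ⟨hx.1, hxc.le⟩).1]
      refine (hresS x ⟨hx.1, hxc⟩).trans (mul_le_mul_of_nonneg_right ?_ hh)
      linarith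
    · rw [hUr'' x ⟨hxc, hx.2⟩, (hUr x ⟨hxc, hx.2.le⟩).1]
      have h1 := hresI _ (hY'' x ⟨hxc, hx.2⟩).1
      rw [(hYr x ⟨hxc, hx.2.le⟩).2] at h1
      refine h1.trans (mul_le_mul_of_nonneg_right ?_ hh)
      linarith
  · rw [(hUl a haa).1, hta]
  · rw [(hUr b (right_mem_Icc.2 hcb.le)).1, hYb]
  · have h1 := hUr (X v) (hYl v hv).1
    rw [(hYl v hv).2] at h1
    refine ⟨hs0.le.trans hv.1, hXr v hv, h1.1, h1.2, hX'pos v hv, ?_⟩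
    rw [le_one_div hδ₀pos (hX'pos v hv)]
    exact hX'le v hv

/-- main approximation theorem for the SI-method: under hypotheses (C1)
and (H), if `u` solves the straight BVP, then `u` is strictly increasing with `u' > 0`
on `[a,b]`, its inverse `x = u⁻¹` is continuously differentiable on `[0,u_b]`, and there
exist constants `κ_S, κ_I, h₀ > 0` (depending only on the data of the problem) such that
for all meshes of maximal step size `h ≤ h₀` and every scheme pair `(ũ, x̃)` satisfying
the sign inequalities, `ũ` approximates `u` within `κ_S·h²` in the C¹-norm on `[a,c]`
and `x̃` approximates `x` within `κ_I·h²` in the C¹-norm on `[ũ(c), u_b]`. -/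
theorem si_method_approximation
    (a b c ub : ℝ) (hab : a < b) (hub : 0 < ub) (hc : c ∈ Ioo a b)
    (N : ℝ → ℝ → ℝ) (hN : ContDiff ℝ 2 (Function.uncurry N))
    (hC1 : ∀ t : ℝ, ∀ x ∈ Icc a b, 0 ≤ pd1 (Ncal N) t x)
    (hH : HypH N a b)
    (u u' u'' : ℝ → ℝ)
    (hu : IsStraightBVP N a b ub u u' u'') :
    StrictMonoOn u (Icc a b) ∧ (∀ x ∈ Icc a b, 0 < u' x) ∧
    ∃ xinv xinv' : ℝ → ℝ,
      (∀ t ∈ Icc a b, xinv (u t) = t) ∧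
      (∀ v ∈ Icc (0:ℝ) ub, xinv v ∈ Icc a b ∧ u (xinv v) = v) ∧
      (∀ v ∈ Icc (0:ℝ) ub, HasDerivWithinAt xinv (xinv' v) (Icc 0 ub) v) ∧
      ContinuousOn xinv' (Icc 0 ub) ∧
      ∃ κS κI h₀ : ℝ, 0 < κS ∧ 0 < κI ∧ 0 < h₀ ∧
        ∀ ms mi : Mesh,
          ms.pt 0 = a → ms.pt ms.n = c → mi.pt 0 = 0 → mi.pt mi.n = ub →
          ∀ ut ut' X X' : ℝ → ℝ, GoodPair N a b c ub ms mi ut ut' X X' →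
          ∀ h : ℝ, h ≤ h₀ → StepLe ms mi (ut c) h →
            (∀ x ∈ Icc a c,
              |u x - ut x| ≤ κS * h ^ 2 ∧ |u' x - ut' x| ≤ κS * h ^ 2) ∧
            (∀ v ∈ Icc (ut c) ub,
              |xinv v - X v| ≤ κI * h ^ 2 ∧ |xinv' v - X' v| ≤ κI * h ^ 2) := by
  have hnn := hu.nonneg hub hN hC1
  have hu'pos := hu.deriv_pos hab hub hN hC1 hH
  have hu'mono := hu.monotoneOn_deriv hH hnn
  have hu0 := hu
  obtain ⟨⟨hd, hd', hc''⟩, heq, hua, hubv⟩ := hu0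
  have huc : ContinuousOn u (Icc a b) := fun t ht => (hd t ht).continuousWithinAt
  have huc' : ContinuousOn u' (Icc a b) := fun t ht => (hd' t ht).continuousWithinAt
  have hsm : StrictMonoOn u (Icc a b) :=
    strictMonoOn_of_hasDerivWithinAt_pos (f' := u') (convex_Icc a b) huc
      (fun s hs => (hd s (interior_subset hs)).mono interior_subset)
      (fun s hs => hu'pos s (interior_subset hs))
  have haa : a ∈ Icc a b := left_mem_Icc.2 hab.le
  obtain ⟨g, hgl, hgr, hgd, hgc, -⟩ := exists_inverse_with_right_second_deriv hab.le hd huc' hu'pos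
    (fun t ht => (hd' t ⟨ht.1, ht.2.le⟩).Icc_to_Ici ht)
  rw [hua, hubv] at hgl hgr hgd hgc
  refine ⟨hsm, hu'pos, g, fun v => 1 / u' (g v), fun t ht => (hgl t ht).2, hgr, hgd, hgc, ?_⟩
  obtain ⟨M, hM⟩ := exists_isTaylorBound (contDiff_uncurry_Ncal hN) 0 ub a b
  obtain ⟨K, δ₀, hK, hδ₀, hrec⟩ := exists_reconstruction hub hc.1 hc.2 hN hH
  obtain ⟨B, hB⟩ := isCompact_Icc.exists_bound_of_continuousOn hc''
  have hB0 : 0 ≤ B := (norm_nonneg _).trans (hB a haa)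
  have hM0 := hM.pos
  have hba : 0 < b - a := sub_pos.2 hab
  have hm := hu'pos a haa
  set m := u' a with hmdef
  set κ₀ := (b - a) ^ 2 * K with hκ₀
  set κ₁ := 2 * (b - a) * (M * (b - a) ^ 2 + 1) * K with hκ₁
  have hκ₀pos : 0 < κ₀ := by positivity
  have hκ₁pos : 0 < κ₁ := by positivity
  refine ⟨κ₀ + κ₁, κ₀ / m + (B * (κ₀ / m) + κ₁) / (m * δ₀), 1, by positivity, by positivity,
    one_pos, ?_⟩
  intro ms mi hms0 hmsn hmi0 hmin ut ut' X X' hgood h _ hstep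
  obtain ⟨U, U', U'', hU, hU'c, hU'', hUr, hres, hUa, hUb, hUl, hUX⟩ :=
    hrec ms mi hms0 hmsn hmi0 hmin ut ut' X X' hgood h hstep
  have hh := sq_nonneg h
  have herr := hu.stability hab hM (fun x hx => Ncal_monotone hN fun t => hC1 t x hx)
    (fun x hx => (hgl x hx).1) (by positivity) hU hU'c hU'' hUr hres hUa hUb
  have herr₀ : ∀ x ∈ Icc a b, |u x - U x| ≤ κ₀ * h ^ 2 := fun x hx =>
    (herr x hx).1.trans_eq (by rw [hκ₀]; ring)
  have herr₁ : ∀ x ∈ Icc a b, |u' x - U' x| ≤ κ₁ * h ^ 2 := fun x hx =>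
    (herr x hx).2.trans_eq (by rw [hκ₁]; ring)
  refine ⟨fun x hx => ?_, fun v hv => ?_⟩
  · have hxb : x ∈ Icc a b := ⟨hx.1, hx.2.trans hc.2.le⟩
    rw [← (hUl x hx).1, ← (hUl x hx).2]
    exact ⟨(herr₀ x hxb).trans (mul_le_mul_of_nonneg_right (by linarith) hh),
      (herr₁ x hxb).trans (mul_le_mul_of_nonneg_right (by linarith) hh)⟩
  obtain ⟨hv0, hXv, hUXv, hU'Xv, hX'v, hδX⟩ := hUX v hv
  obtain ⟨hgv, hugv⟩ := hgr v ⟨hv0, hv.2⟩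
  have hexp : m * |g v - X v| ≤ |u (g v) - u (X v)| := by
    have key : ∀ x ∈ Icc a b, ∀ y ∈ Icc a b, x ≤ y → m * (y - x) ≤ u y - u x :=
      fun x hx y hy hxy => le_sub_of_le_right_deriv huc
        (fun s hs => (hd s ⟨hs.1, hs.2.le⟩).Icc_to_Ici hs)
        (fun s hs => hu'mono haa ⟨hs.1, hs.2.le⟩ hs.1) hx.1 hxy hy.2
    rcases le_total (g v) (X v) with hle | hle
    · rw [abs_sub_comm, abs_of_nonneg (sub_nonneg.2 hle), abs_sub_comm]
      exact (key _ hgv _ hXv hle).trans (le_abs_self _)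
    · rw [abs_of_nonneg (sub_nonneg.2 hle)]
      exact (key _ hXv _ hgv hle).trans (le_abs_self _)
  have hx₀ : |g v - X v| ≤ κ₀ / m * h ^ 2 := by
    have h1 := herr₀ _ hXv
    rw [hUXv, abs_sub_comm] at h1
    rw [hugv] at hexp
    rw [div_mul_eq_mul_div, le_div_iff₀ hm]
    linarith
  have hlip : |u' (g v) - u' (X v)| ≤ B * |g v - X v| := by
    have key : ∀ x ∈ Icc a b, ∀ y ∈ Icc a b, x ≤ y → |u' y - u' x| ≤ B * (y - x) :=
      fun x hx y hy hxy => abs_sub_le_of_abs_right_deriv_le huc'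
        (fun s hs => (hd' s ⟨hs.1, hs.2.le⟩).Icc_to_Ici hs)
        (fun s hs => hB s ⟨hs.1, hs.2.le⟩) hx.1 hxy hy.2
    rcases le_total (g v) (X v) with hle | hle
    · rw [abs_sub_comm, abs_sub_comm (g v), abs_of_nonneg (sub_nonneg.2 hle)]
      exact key _ hgv _ hXv hle
    · rw [abs_of_nonneg (sub_nonneg.2 hle)]
      exact key _ hXv _ hgv hle
  have hder : |u' (g v) - 1 / X' v| ≤ (B * (κ₀ / m) + κ₁) * h ^ 2 := by
    have h1 := herr₁ _ hXv
    rw [hU'Xv] at h1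
    have h2 := mul_le_mul_of_nonneg_left hx₀ hB0
    have h3 := abs_sub_le (u' (g v)) (u' (X v)) (1 / X' v)
    linarith
  have hmg : m ≤ u' (g v) := hu'mono haa hgv hgv.1
  constructor
  · exact hx₀.trans (mul_le_mul_of_nonneg_right (le_add_of_nonneg_right (by positivity)) hh)
  · have hw : 0 < 1 / X' v := hδ₀.trans_le hδX
    have hg0 : 0 < u' (g v) := hm.trans_le hmg
    have hid : 1 / u' (g v) - X' v = -(u' (g v) - 1 / X' v) / (u' (g v) * (1 / X' v)) := by
      field_simp
      ring
    rw [hid, abs_div, abs_neg, abs_of_pos (mul_pos hg0 hw), add_mul, div_mul_eq_mul_div _ _ (h ^ 2)]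
    refine le_trans (div_le_div₀ (by positivity) hder (by positivity)
      (mul_le_mul hmg hδX hδ₀.le hg0.le)) ?_
    rw [div_mul_eq_mul_div]
    exact le_add_of_nonneg_left (by positivity)
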